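/- arXiv:2206.09567 — 10 statements merged into one kernel-verified Lean document; each statement's English description precedes it below -/
import Mathlib

section
/- (Theorem 1: 2-WL has stronger link discriminating power than 1-WL.) (i) For every label set Σ, all labeled graphs G = (V,E,l) and G' = (V',E',l') over Σ, and all target links (p,q) in G and (p',q') in G': if (p,q) and (p',q') are 2-WL-indistinguishable, then they are 1-WL-indistinguishable. (ii) There exist unlabeled graphs G, G' and target links (p,q) in G and (p',q') in G' that are 1-WL-indistinguishable but not 2-WL-indistinguishable. -/
open scoped Classical

universe u v

/-- The common 1-WL color type over label set `σ`:
`C 0 = σ`, `C (t+1) = C t × Multiset (C t)`. -/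
def WL1Color (σ : Type u) : ℕ → Type u
  | 0 => σ
  | t + 1 => WL1Color σ t × Multiset (WL1Color σ t)

/-- The 1-WL coloring of a labeled graph `(G, l)`:
`c¹⁰(v) = l v`, `c¹ᵗ⁺¹(v) = (c¹ᵗ(v), {{c¹ᵗ(u) : u ∈ N(v)}})`. -/
noncomputable def wl1 {σ : Type u} {V : Type v} [Fintype V] (G : SimpleGraph V)
    (l : V → σ) : (t : ℕ) → V → WL1Color σ t
  | 0 => l
  | t + 1 => fun v => (wl1 G l t v, (G.neighborFinset v).val.map (wl1 G l t))

/-- The type of initial pair colors over label set `σ`. -/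
def PairColor0 (σ : Type u) : Type u := σ × σ × Bool × Bool

/-- Initial pair color `c⁰(p,q) = (l p, l q, 1_{(p,q)∈E}, 1_{p=q})`. -/
noncomputable def pairInit {σ : Type u} {V : Type v} (G : SimpleGraph V) (l : V → σ)
    (e : V × V) : PairColor0 σ :=
  (l e.1, l e.2, decide (G.Adj e.1 e.2), decide (e.1 = e.2))

/-- The common (plain/local) 2-WL pair color type over label set `σ`. -/
def WL2Color (σ : Type u) : ℕ → Type u
  | 0 => PairColor0 σ
  | t + 1 => WL2Color σ t × Multiset (WL2Color σ t) × Multiset (WL2Color σ t)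

/-- The plain 2-WL coloring:
`c₂ᵗ⁺¹(p,q) = (c₂ᵗ(p,q), {{c₂ᵗ(u,q) : u ∈ V}}, {{c₂ᵗ(p,v) : v ∈ V}})`. -/
noncomputable def wl2 {σ : Type u} {V : Type v} [Fintype V] (G : SimpleGraph V)
    (l : V → σ) : (t : ℕ) → V × V → WL2Color σ t
  | 0 => pairInit G l
  | t + 1 => fun e =>
      (wl2 G l t e,
        Finset.univ.val.map (fun u => wl2 G l t (u, e.2)),
        Finset.univ.val.map (fun v => wl2 G l t (e.1, v)))

/-- The local 2-WL (2-WL_L) coloring: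
`cₗᵗ⁺¹(p,q) = (cₗᵗ(p,q), {{cₗᵗ(u,q) : (u,q) ∈ E}}, {{cₗᵗ(p,v) : (p,v) ∈ E}})`. -/
noncomputable def wl2L {σ : Type u} {V : Type v} [Fintype V] (G : SimpleGraph V)
    (l : V → σ) : (t : ℕ) → V × V → WL2Color σ t
  | 0 => pairInit G l
  | t + 1 => fun e =>
      (wl2L G l t e,
        (Finset.univ.filter (fun u => G.Adj u e.2)).val.map (fun u => wl2L G l t (u, e.2)),
        (Finset.univ.filter (fun v => G.Adj e.1 v)).val.map (fun v => wl2L G l t (e.1, v)))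

/-- The common (plain/local) 2-FWL pair color type over label set `σ`. -/
def FWLColor (σ : Type u) : ℕ → Type u
  | 0 => PairColor0 σ
  | t + 1 => FWLColor σ t × Multiset (FWLColor σ t × FWLColor σ t)

/-- The 2-FWL coloring:
`c_Fᵗ⁺¹(p,q) = (c_Fᵗ(p,q), {{(c_Fᵗ(u,q), c_Fᵗ(p,u)) : u ∈ V}})`. -/
noncomputable def fwl2 {σ : Type u} {V : Type v} [Fintype V] (G : SimpleGraph V)
    (l : V → σ) : (t : ℕ) → V × V → FWLColor σ t
  | 0 => pairInit G l
  | t + 1 => fun e =>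
      (fwl2 G l t e,
        Finset.univ.val.map (fun u => (fwl2 G l t (u, e.2), fwl2 G l t (e.1, u))))

/-- The local 2-FWL (2-FWL_L) coloring:
`c_FLᵗ⁺¹(p,q) = (c_FLᵗ(p,q), {{(c_FLᵗ(u,q), c_FLᵗ(p,u)) : (u,q) ∈ E or (p,u) ∈ E}})`. -/
noncomputable def fwl2L {σ : Type u} {V : Type v} [Fintype V] (G : SimpleGraph V)
    (l : V → σ) : (t : ℕ) → V × V → FWLColor σ t
  | 0 => pairInit G l
  | t + 1 => fun e =>
      (fwl2L G l t e,
        (Finset.univ.filter (fun u => G.Adj u e.2 ∨ G.Adj e.1 u)).val.map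
          (fun u => (fwl2L G l t (u, e.2), fwl2L G l t (e.1, u))))

/-- A target link: an ordered pair of distinct, non-adjacent vertices. -/
def IsTargetLink {V : Type v} (G : SimpleGraph V) (e : V × V) : Prop :=
  e.1 ≠ e.2 ∧ ¬ G.Adj e.1 e.2

/-- `(p,q)` in `(G,l)` and `(p',q')` in `(G',l')` are 1-WL-indistinguishable. -/
noncomputable def WL1Indist {σ : Type u} {V V' : Type v} [Fintype V] [Fintype V']
    (G : SimpleGraph V) (l : V → σ) (G' : SimpleGraph V') (l' : V' → σ)
    (e : V × V) (e' : V' × V') : Prop :=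
  ∀ t : ℕ, wl1 G l t e.1 = wl1 G' l' t e'.1 ∧ wl1 G l t e.2 = wl1 G' l' t e'.2

/-- 2-WL-indistinguishability. -/
noncomputable def WL2Indist {σ : Type u} {V V' : Type v} [Fintype V] [Fintype V']
    (G : SimpleGraph V) (l : V → σ) (G' : SimpleGraph V') (l' : V' → σ)
    (e : V × V) (e' : V' × V') : Prop :=
  ∀ t : ℕ, wl2 G l t e = wl2 G' l' t e'

/-- Local 2-WL (2-WL_L) indistinguishability. -/
noncomputable def WL2LIndist {σ : Type u} {V V' : Type v} [Fintype V] [Fintype V']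
    (G : SimpleGraph V) (l : V → σ) (G' : SimpleGraph V') (l' : V' → σ)
    (e : V × V) (e' : V' × V') : Prop :=
  ∀ t : ℕ, wl2L G l t e = wl2L G' l' t e'

/-- 2-FWL-indistinguishability. -/
noncomputable def FWL2Indist {σ : Type u} {V V' : Type v} [Fintype V] [Fintype V']
    (G : SimpleGraph V) (l : V → σ) (G' : SimpleGraph V') (l' : V' → σ)
    (e : V × V) (e' : V' × V') : Prop :=
  ∀ t : ℕ, fwl2 G l t e = fwl2 G' l' t e'

/-- Local 2-FWL (2-FWL_L) indistinguishability. -/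
noncomputable def FWL2LIndist {σ : Type u} {V V' : Type v} [Fintype V] [Fintype V']
    (G : SimpleGraph V) (l : V → σ) (G' : SimpleGraph V') (l' : V' → σ)
    (e : V × V) (e' : V' × V') : Prop :=
  ∀ t : ℕ, fwl2L G l t e = fwl2L G' l' t e'

/-- The 0/1 labeling trick: augment the labeling with indicator of membership in `{p, q}`. -/
noncomputable def label01 {σ : Type u} {V : Type v} (l : V → σ) (e : V × V) :
    V → σ × Bool :=
  fun v => (l v, decide (v = e.1 ∨ v = e.2))

/-- 1-WL-with-0/1-labeling indistinguishability of target links. -/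
noncomputable def WL1LabelIndist {σ : Type u} {V V' : Type v} [Fintype V] [Fintype V']
    (G : SimpleGraph V) (l : V → σ) (G' : SimpleGraph V') (l' : V' → σ)
    (e : V × V) (e' : V' × V') : Prop :=
  WL1Indist G (label01 l e) G' (label01 l' e') e e'

/-- The number of common neighbors of `p` and `q` in `G`. -/
noncomputable def commonNbrCount {V : Type v} [Fintype V] (G : SimpleGraph V)
    (e : V × V) : ℕ :=
  (G.neighborFinset e.1 ∩ G.neighborFinset e.2).card

/-!
The 1-WL colors of both entries of a pair `(p, q)` can be read off its 2-WL color: the entries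
`(p, v)` of the row of `p` record the edge indicators, so restricting that row to edges leaves the
colors of the neighbors of `p`, and dually for the column of `q`. Strictness comes from 2-WL
counting all vertices, whereas 1-WL sees only the local structure and gives one color to all
vertices of all unlabeled `d`-regular graphs. Hence the 4-cycle and the 5-cycle separate the two.
-/

/-- The 1-WL color at iteration `t` of every vertex of a `d`-regular graph whose vertices all carry
the label `a`. -/
def WL1Color.ofRegular {σ : Type u} (a : σ) (d : ℕ) : (t : ℕ) → WL1Color σ t
  | 0 => a
  | t + 1 => (ofRegular a d t, Multiset.replicate d (ofRegular a d t))

namespace WL2Color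

/-- The edge indicator of a pair as a function of its 2-WL color. It is part of the initial color,
which every later color retains as its innermost first component. -/
def isEdge {σ : Type u} : (t : ℕ) → WL2Color σ t → Bool
  | 0, c => c.2.2.1
  | t + 1, c => isEdge t c.1

/-- The 1-WL colors of the two entries of a pair as a function of its 2-WL color. Neighbors of the
first entry are read off the multiset over `(p, v)` and neighbors of the second off the multiset
over `(u, q)`, so the two multisets are used in swapped order. -/
noncomputable def endpoints {σ : Type u} : (t : ℕ) → WL2Color σ t → WL1Color σ t × WL1Color σ t
  | 0, c => (c.1, c.2.1)
  | t + 1, (c, column, row) =>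
      (((endpoints t c).1, (row.filter (isEdge t ·)).map fun d => (endpoints t d).2),
        ((endpoints t c).2, (column.filter (isEdge t ·)).map fun d => (endpoints t d).1))

end WL2Color

section Colorings

variable {σ : Type u} {V : Type v} [Fintype V]

theorem isEdge_wl2 (G : SimpleGraph V) (l : V → σ) (t : ℕ) (e : V × V) :
    (wl2 G l t e).isEdge t = true ↔ G.Adj e.1 e.2 := by
  induction t with
  | zero => exact decide_eq_true_iff
  | succ _ ih => exact ih

theorem filter_isEdge_wl2_row (G : SimpleGraph V) (l : V → σ) (t : ℕ) (p : V) :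
    (Finset.univ.val.map fun v => wl2 G l t (p, v)).filter (WL2Color.isEdge t ·) =
      (G.neighborFinset p).val.map fun v => wl2 G l t (p, v) := by
  have neighbors_eq : G.neighborFinset p = Finset.univ.filter (G.Adj p) := by ext; simp
  simp only [Multiset.filter_map, Function.comp_def, isEdge_wl2, neighbors_eq, Finset.filter_val]

theorem filter_isEdge_wl2_column (G : SimpleGraph V) (l : V → σ) (t : ℕ) (q : V) :
    (Finset.univ.val.map fun u => wl2 G l t (u, q)).filter (WL2Color.isEdge t ·) =
      (G.neighborFinset q).val.map fun u => wl2 G l t (u, q) := by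
  have neighbors_eq : G.neighborFinset q = Finset.univ.filter (G.Adj · q) := by
    ext; simp [G.adj_comm]
  simp only [Multiset.filter_map, Function.comp_def, isEdge_wl2, neighbors_eq, Finset.filter_val]

theorem endpoints_wl2 (G : SimpleGraph V) (l : V → σ) (t : ℕ) (e : V × V) :
    (wl2 G l t e).endpoints t = (wl1 G l t e.1, wl1 G l t e.2) := by
  induction t generalizing e with
  | zero => rfl
  | succ t ih =>
    simp only [WL2Color.endpoints, wl2, wl1, filter_isEdge_wl2_row, filter_isEdge_wl2_column,
      Multiset.map_map, Function.comp_def, ih]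

theorem wl1_eq_ofRegular {G : SimpleGraph V} [G.LocallyFinite] {d : ℕ}
    (hG : G.IsRegularOfDegree d) (a : σ) (t : ℕ) (x : V) :
    wl1 G (fun _ => a) t x = WL1Color.ofRegular a d t := by
  induction t generalizing x with
  | zero => rfl
  | succ t ih =>
    simp only [wl1, WL1Color.ofRegular, funext ih, Multiset.map_const', Finset.card_val]
    refine congrArg (fun k => (_, Multiset.replicate k _)) ?_
    rw [← hG x, ← G.card_neighborFinset_eq_degree x]
    congr!

end Colorings

section Indistinguishability

variable {σ : Type u} {V V' : Type v} [Fintype V] [Fintype V'] {G : SimpleGraph V}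
  {G' : SimpleGraph V'} {e : V × V} {e' : V' × V'}

theorem WL2Indist.wl1Indist {l : V → σ} {l' : V' → σ} (h : WL2Indist G l G' l' e e') :
    WL1Indist G l G' l' e e' := fun t => by
  simpa only [endpoints_wl2, Prod.mk.injEq] using congrArg (WL2Color.endpoints t) (h t)

theorem WL2Indist.card_eq {l : V → σ} {l' : V' → σ} (h : WL2Indist G l G' l' e e') :
    Fintype.card V = Fintype.card V' :=
  calc
    Fintype.card V = Multiset.card (wl2 G l 1 e).2.1 := (Multiset.card_map _ _).symm
    _ = Multiset.card (wl2 G' l' 1 e').2.1 := by rw [h 1]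
    _ = Fintype.card V' := Multiset.card_map _ _

theorem wl1Indist_of_isRegularOfDegree [G.LocallyFinite] [G'.LocallyFinite] {d : ℕ}
    (hG : G.IsRegularOfDegree d) (hG' : G'.IsRegularOfDegree d) (a : σ) (e : V × V) (e' : V' × V') :
    WL1Indist G (fun _ => a) G' (fun _ => a) e e' :=
  fun t => by simp only [wl1_eq_ofRegular hG, wl1_eq_ofRegular hG', and_self]

end Indistinguishability

theorem cycleGraph_isRegularOfDegree_two {n : ℕ} (hn : 3 ≤ n) :
    (SimpleGraph.cycleGraph n).IsRegularOfDegree 2 := by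
  obtain ⟨m, rfl⟩ := Nat.exists_eq_add_of_le' hn
  intro v
  convert SimpleGraph.cycleGraph_degree_three_le (v := v)

theorem isTargetLink_cycleGraph_zero_two {n : ℕ} (hn : 4 ≤ n) :
    IsTargetLink (SimpleGraph.cycleGraph n) (⟨0, by omega⟩, ⟨2, by omega⟩) := by
  refine ⟨by simp, ?_⟩
  have zero_sub_two : (n - 2) % n = n - 2 := Nat.mod_eq_of_lt (by omega)
  have two_sub_zero : (n + 2) % n = 2 := by
    rw [Nat.add_mod_left, Nat.mod_eq_of_lt (by omega)]
  simp only [SimpleGraph.cycleGraph_adj', Fin.sub_def, Nat.sub_zero, Nat.add_zero,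
    zero_sub_two, two_sub_zero]
  omega

theorem wl2_stronger_than_wl1_general :
    (∀ (σ : Type u) (V V' : Type v) [Fintype V] [Fintype V']
        (G : SimpleGraph V) (l : V → σ) (G' : SimpleGraph V') (l' : V' → σ)
        (e : V × V) (e' : V' × V'),
        WL2Indist G l G' l' e e' → WL1Indist G l G' l' e e') ∧
    (∃ (n n' : ℕ) (G : SimpleGraph (Fin n)) (G' : SimpleGraph (Fin n'))
        (e : Fin n × Fin n) (e' : Fin n' × Fin n'),
        IsTargetLink G e ∧ IsTargetLink G' e' ∧
        WL1Indist G (fun _ => ()) G' (fun _ => ()) e e' ∧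
        ¬ WL2Indist G (fun _ => ()) G' (fun _ => ()) e e') := by
  refine ⟨fun _ _ _ _ _ _ _ _ _ _ _ h => h.wl1Indist,
    4, 5, SimpleGraph.cycleGraph 4, SimpleGraph.cycleGraph 5, _, _,
    isTargetLink_cycleGraph_zero_two le_rfl, isTargetLink_cycleGraph_zero_two (by norm_num),
    wl1Indist_of_isRegularOfDegree (cycleGraph_isRegularOfDegree_two (by norm_num))
      (cycleGraph_isRegularOfDegree_two (by norm_num)) () _ _, fun h => ?_⟩
  simpa using h.card_eq

/-- Theorem 1: 2-WL has stronger link discriminating power than 1-WL. -/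
theorem wl2_stronger_than_wl1 :
    (∀ (σ : Type u) (V V' : Type v) [Fintype V] [Fintype V']
        (G : SimpleGraph V) (l : V → σ) (G' : SimpleGraph V') (l' : V' → σ)
        (e : V × V) (e' : V' × V'),
        IsTargetLink G e → IsTargetLink G' e' →
        WL2Indist G l G' l' e e' → WL1Indist G l G' l' e e') ∧
    (∃ (n n' : ℕ) (G : SimpleGraph (Fin n)) (G' : SimpleGraph (Fin n'))
        (e : Fin n × Fin n) (e' : Fin n' × Fin n'),
        IsTargetLink G e ∧ IsTargetLink G' e' ∧
        WL1Indist G (fun _ => ()) G' (fun _ => ()) e e' ∧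
        ¬ WL2Indist G (fun _ => ()) G' (fun _ => ()) e e') :=
  ⟨fun σ V V' _ _ G l G' l' e e' _ _ =>
    wl2_stronger_than_wl1_general.1 σ V V' G l G' l' e e',
    wl2_stronger_than_wl1_general.{u, v}.2⟩
end

section
/- (Theorem 2: 2-FWL has stronger link discriminating power than 2-WL.) (i) For every label set Σ, all labeled graphs G = (V,E,l) and G' = (V',E',l') over Σ, and all target links (p,q) in G and (p',q') in G': if (p,q) and (p',q') are 2-FWL-indistinguishable, then they are 2-WL-indistinguishable. (ii) There exist unlabeled graphs G, G' and target links (p,q) in G and (p',q') in G' that are 2-WL-indistinguishable but not 2-FWL-indistinguishable. -/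
open scoped Classical

universe u v

/-! 2-FWL refines 2-WL because its multiset of pairs of colors projects onto both multisets of colors
collected by 2-WL. The converse fails because 2-WL never relates the two pairs `(u, q)` and `(p, u)`
seen from the same `u`. In an unlabeled regular graph every multiset it collects is therefore fixed by
the order and the degree, and it never gets past the initial colors; 2-FWL counts common neighbors in
one iteration, which separates `(0, 2)` from `(0, 3)` in the 6-cycle. -/

theorem multiset_map_eq_map_of_imp {α β γ δ : Type*} {s : Multiset α} {s' : Multiset β}
    {f : α → γ} {f' : β → γ} {g : α → δ} {g' : β → δ} (h : s.map f = s'.map f')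
    (hfg : ∀ a ∈ s, ∀ b ∈ s', f a = f' b → g a = g' b) : s.map g = s'.map g' := by
  rw [← Multiset.rel_eq, Multiset.rel_map] at h ⊢
  exact h.mono hfg

theorem multiset_map_univ_eq_of_equiv {α β γ : Type*} [Fintype α] [Fintype β] {f : α → γ}
    {g : β → γ} (φ : α ≃ β) (h : ∀ a, f a = g (φ a)) :
    (Finset.univ : Finset α).val.map f = (Finset.univ : Finset β).val.map g := by
  rw [← Multiset.map_univ_val_equiv φ, Multiset.map_map]
  exact Multiset.map_congr rfl fun a _ => h a

theorem exists_equiv_forall_iff_of_card_eq {α β : Type*} [Fintype α] [Fintype β]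
    {p : α → Prop} {q : β → Prop} [Fintype {a // p a}] [Fintype {b // q b}]
    (hcard : Fintype.card α = Fintype.card β)
    (hpq : Fintype.card {a // p a} = Fintype.card {b // q b}) :
    ∃ φ : α ≃ β, ∀ a, p a ↔ q (φ a) := by
  have hcompl : Fintype.card {a // ¬ p a} = Fintype.card {b // ¬ q b} := by
    rw [Fintype.card_subtype_compl, Fintype.card_subtype_compl, hcard, hpq]
  let φ₁ := Fintype.equivOfCardEq hpq
  let φ₂ := Fintype.equivOfCardEq hcompl
  refine ⟨(Equiv.sumCompl p).symm.trans ((φ₁.sumCongr φ₂).trans (Equiv.sumCompl q)), fun a => ?_⟩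
  by_cases ha : p a
  · simpa [ha] using (φ₁ ⟨a, ha⟩).2
  · simpa [ha] using (φ₂ ⟨a, ha⟩).2

theorem exists_equiv_adj_iff_of_degree_eq {V V' : Type*} [Fintype V] [Fintype V']
    {G : SimpleGraph V} {G' : SimpleGraph V'} {v : V} {v' : V'} [Fintype (G.neighborSet v)]
    [Fintype (G'.neighborSet v')] (hcard : Fintype.card V = Fintype.card V')
    (hdeg : G.degree v = G'.degree v') :
    ∃ φ : V ≃ V', φ v = v' ∧ ∀ u, G.Adj v u ↔ G'.Adj v' (φ u) := by
  obtain ⟨φ, hφ⟩ : ∃ φ : V ≃ V', ∀ u, u ∈ G.neighborSet v ↔ φ u ∈ G'.neighborSet v' :=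
    exists_equiv_forall_iff_of_card_eq hcard <| by
      rwa [← G.card_neighborSet_eq_degree, ← G'.card_neighborSet_eq_degree] at hdeg
  have hv : ¬ G'.Adj v' (φ v) := fun h => G.irrefl ((hφ v).mpr h)
  -- Neither `φ v` nor `v'` is a neighbor of `v'`, so swapping them preserves the neighborhood.
  refine ⟨φ.trans (Equiv.swap (φ v) v'), by simp, fun u => (hφ u).trans ?_⟩
  simp only [SimpleGraph.mem_neighborSet, Equiv.trans_apply, Equiv.swap_apply_def]
  split_ifs with h₁ h₂
  · simp [h₁, hv]
  · simp [h₂, hv]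
  · rfl

theorem commonNbrCount_eq_sum {V : Type*} [Fintype V] (G : SimpleGraph V) [DecidableRel G.Adj]
    (e : V × V) : commonNbrCount G e = ∑ u, if G.Adj u e.2 ∧ G.Adj e.1 u then 1 else 0 := by
  rw [commonNbrCount, ← Finset.card_filter]
  congr 1
  ext u
  simp [G.adj_comm, and_comm]

section

variable {σ V V' : Type*} {G : SimpleGraph V} {l : V → σ} {G' : SimpleGraph V'} {l' : V' → σ}
  {e : V × V} {e' : V' × V'}

theorem pairInit_eq_iff :
    pairInit G l e = pairInit G' l' e' ↔ l e.1 = l' e'.1 ∧ l e.2 = l' e'.2 ∧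
      (G.Adj e.1 e.2 ↔ G'.Adj e'.1 e'.2) ∧ (e.1 = e.2 ↔ e'.1 = e'.2) := by
  simp only [pairInit, PairColor0, Prod.mk.injEq, decide_eq_decide]

variable [Fintype V] [Fintype V']

theorem wl2_eq_of_fwl2_eq {t : ℕ} (h : fwl2 G l t e = fwl2 G' l' t e') :
    wl2 G l t e = wl2 G' l' t e' := by
  induction t generalizing e e' with
  | zero => exact h
  | succ t ih =>
    obtain ⟨hpair, hvia⟩ := Prod.ext_iff.mp h
    refine Prod.ext (ih hpair) (Prod.ext ?_ ?_)
    · exact multiset_map_eq_map_of_imp hvia fun _ _ _ _ hu => ih (Prod.ext_iff.mp hu).1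
    · exact multiset_map_eq_map_of_imp hvia fun _ _ _ _ hu => ih (Prod.ext_iff.mp hu).2

theorem commonNbrCount_eq_of_fwl2_one_eq (h : fwl2 G l 1 e = fwl2 G' l' 1 e') :
    commonNbrCount G e = commonNbrCount G' e' := by
  rw [commonNbrCount_eq_sum, commonNbrCount_eq_sum]
  refine congrArg Multiset.sum
    (multiset_map_eq_map_of_imp (Prod.ext_iff.mp h).2 fun u _ u' _ hu => ?_)
  obtain ⟨hright, hleft⟩ := Prod.ext_iff.mp hu
  have hadj_right : G.Adj u e.2 ↔ G'.Adj u' e'.2 := (pairInit_eq_iff.mp hright).2.2.1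
  have hadj_left : G.Adj e.1 u ↔ G'.Adj e'.1 u' := (pairInit_eq_iff.mp hleft).2.2.1
  simp only [hadj_right, hadj_left]

theorem wl2_eq_of_pairInit_eq_of_isRegularOfDegree [G.LocallyFinite] [G'.LocallyFinite] {d : ℕ}
    (hG : G.IsRegularOfDegree d) (hG' : G'.IsRegularOfDegree d)
    (hcard : Fintype.card V = Fintype.card V') {c : σ}
    (h : pairInit G (fun _ => c) e = pairInit G' (fun _ => c) e') (t : ℕ) :
    wl2 G (fun _ => c) t e = wl2 G' (fun _ => c) t e' := by
  have hequiv (v : V) (v' : V') : ∃ φ : V ≃ V', φ v = v' ∧ ∀ u, G.Adj v u ↔ G'.Adj v' (φ u) :=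
    exists_equiv_adj_iff_of_degree_eq hcard ((hG v).trans (hG' v').symm)
  induction t generalizing e e' with
  | zero => exact h
  | succ t ih =>
    refine Prod.ext (ih h) (Prod.ext ?_ ?_)
    · obtain ⟨φ, hφ, hadj⟩ := hequiv e.2 e'.2
      refine multiset_map_univ_eq_of_equiv φ fun u => ih (pairInit_eq_iff.mpr ?_)
      simp [← hφ, G.adj_comm u, G'.adj_comm (φ u), hadj]
    · obtain ⟨φ, hφ, hadj⟩ := hequiv e.1 e'.1
      refine multiset_map_univ_eq_of_equiv φ fun u => ih (pairInit_eq_iff.mpr ?_)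
      simp [← hφ, hadj]

end

theorem IsTargetLink.wl2Indist_of_isRegularOfDegree {σ : Type u} {V V' : Type v} [Fintype V]
    [Fintype V'] {G : SimpleGraph V} {G' : SimpleGraph V'} [G.LocallyFinite] [G'.LocallyFinite]
    {d : ℕ} {e : V × V} {e' : V' × V'} (he : IsTargetLink G e) (he' : IsTargetLink G' e')
    (hG : G.IsRegularOfDegree d) (hG' : G'.IsRegularOfDegree d)
    (hcard : Fintype.card V = Fintype.card V') (c : σ) :
    WL2Indist G (fun _ => c) G' (fun _ => c) e e' :=
  wl2_eq_of_pairInit_eq_of_isRegularOfDegree hG hG' hcard <|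
    pairInit_eq_iff.mpr ⟨rfl, rfl, iff_of_false he.2 he'.2, iff_of_false he.1 he'.1⟩

theorem fwl2_stronger_than_wl2_general :
    (∀ (σ : Type u) (V V' : Type v) [Fintype V] [Fintype V']
        (G : SimpleGraph V) (l : V → σ) (G' : SimpleGraph V') (l' : V' → σ)
        (e : V × V) (e' : V' × V'),
        FWL2Indist G l G' l' e e' → WL2Indist G l G' l' e e') ∧
    (∃ (n : ℕ) (G : SimpleGraph (Fin n)) (e e' : Fin n × Fin n),
        IsTargetLink G e ∧ IsTargetLink G e' ∧
        WL2Indist G (fun _ => ()) G (fun _ => ()) e e' ∧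
        ¬ FWL2Indist G (fun _ => ()) G (fun _ => ()) e e') := by
  refine ⟨fun _ _ _ _ _ _ _ _ _ _ _ h t => wl2_eq_of_fwl2_eq (h t), ?_⟩
  let C₆ := SimpleGraph.cycleGraph 6
  have htarget₂ : IsTargetLink C₆ (0, 2) := ⟨by decide, by decide⟩
  have htarget₃ : IsTargetLink C₆ (0, 3) := ⟨by decide, by decide⟩
  have hregular : C₆.IsRegularOfDegree 2 := fun _ => SimpleGraph.cycleGraph_degree_three_le
  have hcount₂ : commonNbrCount C₆ (0, 2) = 1 := (commonNbrCount_eq_sum _ _).trans (by decide)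
  have hcount₃ : commonNbrCount C₆ (0, 3) = 0 := (commonNbrCount_eq_sum _ _).trans (by decide)
  refine ⟨6, C₆, (0, 2), (0, 3), htarget₂, htarget₃,
    htarget₂.wl2Indist_of_isRegularOfDegree htarget₃ hregular hregular rfl (), fun h => ?_⟩
  have hcount := commonNbrCount_eq_of_fwl2_one_eq (h 1)
  omega

/-- Theorem 2: 2-FWL has stronger link discriminating power than 2-WL. -/
theorem fwl2_stronger_than_wl2 :
    (∀ (σ : Type u) (V V' : Type v) [Fintype V] [Fintype V']
        (G : SimpleGraph V) (l : V → σ) (G' : SimpleGraph V') (l' : V' → σ)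
        (e : V × V) (e' : V' × V'),
        IsTargetLink G e → IsTargetLink G' e' →
        FWL2Indist G l G' l' e e' → WL2Indist G l G' l' e e') ∧
    (∃ (n n' : ℕ) (G : SimpleGraph (Fin n)) (G' : SimpleGraph (Fin n'))
        (e : Fin n × Fin n) (e' : Fin n' × Fin n'),
        IsTargetLink G e ∧ IsTargetLink G' e' ∧
        WL2Indist G (fun _ => ()) G' (fun _ => ()) e e' ∧
        ¬ FWL2Indist G (fun _ => ()) G' (fun _ => ()) e e') := by
  obtain ⟨refines, n, G, e, e', strict⟩ := fwl2_stronger_than_wl2_general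
  exact ⟨fun σ V V' _ _ G l G' l' e e' _ _ => refines σ V V' G l G' l' e e',
    n, n, G, G, e, e', strict⟩
end

section
/- (Theorem 4: local 2-FWL has stronger link discriminating power than local 2-WL.) (i) For every label set Σ, all labeled graphs G = (V,E,l) and G' = (V',E',l') over Σ, and all target links (p,q) in G and (p',q') in G': if (p,q) and (p',q') are 2-FWL_L-indistinguishable, then they are 2-WL_L-indistinguishable. (ii) There exist unlabeled graphs G, G' and target links (p,q) in G and (p',q') in G' that are 2-WL_L-indistinguishable but not 2-FWL_L-indistinguishable. -/
open scoped Classical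

universe u v

/-! The edge indicators carried by the paired colors pick the neighbors of `p` and those of `q` out
of the 2-FWL_L multiset, so every 2-FWL_L color determines the 2-WL_L color of the same round.
Moreover, 2-FWL_L sees `|N(p) ∪ N(q)|`, hence the number of common neighbors, whereas 2-WL_L
never refines the initial colors of an unlabeled regular graph. In the 6-cycle, the vertices `0, 2`
have a common neighbor and the vertices `0, 3` have none. -/

namespace FWLColor

/-- The edge-existence indicator recorded by a local 2-FWL color: each round keeps the color of
the previous one, so the initial color can be read off. -/
def adjBit {σ : Type u} : (t : ℕ) → FWLColor σ t → Bool
  | 0, c => c.2.2.1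
  | t + 1, c => adjBit t c.1

theorem adjBit_fwl2L {σ : Type u} {V : Type v} [Fintype V] (G : SimpleGraph V) (l : V → σ)
    (t : ℕ) (e : V × V) : adjBit t (fwl2L G l t e) = decide (G.Adj e.1 e.2) := by
  induction t with
  | zero => rfl
  | succ _ ih => exact ih

/-- The local 2-WL color determined by a local 2-FWL color of the same round. A pair
`(c(u,q), c(p,u))` of the 2-FWL multiset contributes to the first 2-WL multiset if `c(u,q)` records
an edge, and to the second one if `c(p,u)` does. -/
def toWL2 {σ : Type u} : (t : ℕ) → FWLColor σ t → WL2Color σ t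
  | 0, c => c
  | t + 1, c =>
      (toWL2 t c.1,
        (c.2.filter fun x => adjBit t x.1 = true).map fun x => toWL2 t x.1,
        (c.2.filter fun x => adjBit t x.2 = true).map fun x => toWL2 t x.2)

theorem toWL2_fwl2L {σ : Type u} {V : Type v} [Fintype V] (G : SimpleGraph V) (l : V → σ)
    (t : ℕ) (e : V × V) : toWL2 t (fwl2L G l t e) = wl2L G l t e := by
  induction t generalizing e with
  | zero => rfl
  | succ t ih =>
    simp only [fwl2L, toWL2, wl2L, ih, Multiset.filter_map, Multiset.map_map,
      Function.comp_def, adjBit_fwl2L, decide_eq_true_eq, Finset.filter_val,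
      Multiset.filter_filter]
    refine Prod.ext rfl (Prod.ext ?_ ?_) <;>
      exact congrArg (Multiset.map _) (Multiset.filter_congr fun u _ => by tauto)

end FWLColor

section ColorCounts

variable {σ : Type u} {V : Type v} [Fintype V] (G : SimpleGraph V) (l : V → σ) (t : ℕ) (e : V × V)

theorem card_wl2L_succ_snd_fst : (wl2L G l (t + 1) e).2.1.card = G.degree e.2 := by
  refine (Multiset.card_map _ _).trans ?_
  simp only [Finset.card_val, SimpleGraph.adj_comm _ _ e.2,
    ← SimpleGraph.neighborFinset_eq_filter, SimpleGraph.card_neighborFinset_eq_degree]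

theorem card_wl2L_succ_snd_snd : (wl2L G l (t + 1) e).2.2.card = G.degree e.1 := by
  refine (Multiset.card_map _ _).trans ?_
  rw [Finset.card_val, ← SimpleGraph.neighborFinset_eq_filter,
    SimpleGraph.card_neighborFinset_eq_degree]

theorem card_fwl2L_succ_snd :
    (fwl2L G l (t + 1) e).2.card = (G.neighborFinset e.1 ∪ G.neighborFinset e.2).card := by
  refine (Multiset.card_map _ _).trans ?_
  simp only [Finset.card_val, SimpleGraph.adj_comm _ _ e.2, Finset.filter_or,
    ← SimpleGraph.neighborFinset_eq_filter, Finset.union_comm]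

end ColorCounts

section Indistinguishability

variable {σ : Type u} {V V' : Type v} [Fintype V] [Fintype V'] {G : SimpleGraph V} {l : V → σ}
  {G' : SimpleGraph V'} {l' : V' → σ} {e : V × V} {e' : V' × V'}

theorem FWL2LIndist.wl2LIndist (h : FWL2LIndist G l G' l' e e') : WL2LIndist G l G' l' e e' :=
  fun t => by rw [← FWLColor.toWL2_fwl2L, ← FWLColor.toWL2_fwl2L, h t]

theorem WL2LIndist.degree_fst_eq (h : WL2LIndist G l G' l' e e') :
    G.degree e.1 = G'.degree e'.1 := by
  rw [← card_wl2L_succ_snd_snd G l 0 e, ← card_wl2L_succ_snd_snd G' l' 0 e', h]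

theorem WL2LIndist.degree_snd_eq (h : WL2LIndist G l G' l' e e') :
    G.degree e.2 = G'.degree e'.2 := by
  rw [← card_wl2L_succ_snd_fst G l 0 e, ← card_wl2L_succ_snd_fst G' l' 0 e', h]

theorem FWL2LIndist.card_neighborFinset_union_eq (h : FWL2LIndist G l G' l' e e') :
    (G.neighborFinset e.1 ∪ G.neighborFinset e.2).card =
      (G'.neighborFinset e'.1 ∪ G'.neighborFinset e'.2).card := by
  rw [← card_fwl2L_succ_snd G l 0 e, ← card_fwl2L_succ_snd G' l' 0 e', h]

theorem FWL2LIndist.commonNbrCount_eq (h : FWL2LIndist G l G' l' e e') :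
    commonNbrCount G e = commonNbrCount G' e' := by
  have union_add_inter :=
    Finset.card_union_add_card_inter (G.neighborFinset e.1) (G.neighborFinset e.2)
  have union_add_inter' :=
    Finset.card_union_add_card_inter (G'.neighborFinset e'.1) (G'.neighborFinset e'.2)
  have degree_fst := h.wl2LIndist.degree_fst_eq
  have degree_snd := h.wl2LIndist.degree_snd_eq
  have card_union := h.card_neighborFinset_union_eq
  simp only [SimpleGraph.card_neighborFinset_eq_degree] at union_add_inter union_add_inter'
  unfold commonNbrCount
  lia

end Indistinguishability

theorem commonNbrCount_eq_card_filter {V : Type v} [Fintype V] (G : SimpleGraph V)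
    [DecidableRel G.Adj] (e : V × V) :
    commonNbrCount G e = (Finset.univ.filter fun u => G.Adj e.1 u ∧ G.Adj e.2 u).card := by
  unfold commonNbrCount
  congr 1
  ext u
  simp

section ConstantLabels

variable {σ : Type u} {V : Type v} {G : SimpleGraph V} {e : V × V}

theorem pairInit_const_of_adj (a : σ) (h : G.Adj e.1 e.2) :
    pairInit G (fun _ => a) e = (a, a, true, false) := by
  rw [pairInit, decide_eq_true h, decide_eq_false h.ne]

theorem IsTargetLink.pairInit_const (h : IsTargetLink G e) (a : σ) :
    pairInit G (fun _ => a) e = (a, a, false, false) := by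
  rw [pairInit, decide_eq_false h.1, decide_eq_false h.2]

end ConstantLabels

theorem map_eq_map_of_card_eq {α β γ : Type*} {s : Multiset α} {s' : Multiset β} {f : α → γ}
    {f' : β → γ} (hcard : s.card = s'.card) (hf : ∀ a ∈ s, ∀ b ∈ s', f a = f' b) :
    s.map f = s'.map f' :=
  Multiset.rel_eq.1 <| Multiset.rel_of_forall
    (fun x y hx hy => by
      obtain ⟨a, ha, rfl⟩ := Multiset.mem_map.1 hx
      obtain ⟨b, hb, rfl⟩ := Multiset.mem_map.1 hy
      exact hf a ha b hb)
    (by simpa only [Multiset.card_map] using hcard)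

theorem wl2L_const_eq_of_isRegularOfDegree {σ : Type u} {V V' : Type*} [Fintype V] [Fintype V']
    {G : SimpleGraph V} {G' : SimpleGraph V'} [G.LocallyFinite] [G'.LocallyFinite] {d : ℕ}
    (hG : G.IsRegularOfDegree d) (hG' : G'.IsRegularOfDegree d) (a : σ) {e : V × V} {e' : V' × V'}
    (h : pairInit G (fun _ => a) e = pairInit G' (fun _ => a) e') (t : ℕ) :
    wl2L G (fun _ => a) t e = wl2L G' (fun _ => a) t e' := by
  induction t generalizing e e' with
  | zero => exact h
  | succ t ih =>
    have color_eq_of_adj {p q : V} {p' q' : V'} (hpq : G.Adj p q) (hpq' : G'.Adj p' q') :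
        wl2L G (fun _ => a) t (p, q) = wl2L G' (fun _ => a) t (p', q') :=
      ih ((pairInit_const_of_adj a hpq).trans (pairInit_const_of_adj a hpq').symm)
    have card_eq (p : V) (p' : V') : (Finset.univ.filter fun u => G.Adj p u).card =
        (Finset.univ.filter fun u => G'.Adj p' u).card := by
      rw [← SimpleGraph.neighborFinset_eq_filter, ← SimpleGraph.neighborFinset_eq_filter,
        SimpleGraph.card_neighborFinset_eq_degree, SimpleGraph.card_neighborFinset_eq_degree]
      convert (hG p).trans (hG' p').symm
    refine Prod.ext (ih h) (Prod.ext (map_eq_map_of_card_eq ?_ ?_) (map_eq_map_of_card_eq ?_ ?_))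
    · simpa only [Finset.card_val, SimpleGraph.adj_comm] using card_eq e.2 e'.2
    · exact fun u hu u' hu' => color_eq_of_adj (by simpa using hu) (by simpa using hu')
    · exact card_eq e.1 e'.1
    · exact fun u hu u' hu' => color_eq_of_adj (by simpa using hu) (by simpa using hu')

theorem IsTargetLink.wl2LIndist_of_isRegularOfDegree {σ : Type u} {V V' : Type v} [Fintype V]
    [Fintype V'] {G : SimpleGraph V} {G' : SimpleGraph V'} [G.LocallyFinite] [G'.LocallyFinite]
    {e : V × V} {e' : V' × V'} (he : IsTargetLink G e) (he' : IsTargetLink G' e') {d : ℕ}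
    (hG : G.IsRegularOfDegree d) (hG' : G'.IsRegularOfDegree d) (a : σ) :
    WL2LIndist G (fun _ => a) G' (fun _ => a) e e' :=
  wl2L_const_eq_of_isRegularOfDegree hG hG' a
    ((he.pairInit_const a).trans (he'.pairInit_const a).symm)

theorem exists_wl2LIndist_and_not_fwl2LIndist :
    ∃ (n : ℕ) (G : SimpleGraph (Fin n)) (e e' : Fin n × Fin n),
      IsTargetLink G e ∧ IsTargetLink G e' ∧
      WL2LIndist G (fun _ => ()) G (fun _ => ()) e e' ∧
      ¬ FWL2LIndist G (fun _ => ()) G (fun _ => ()) e e' := by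
  let G := SimpleGraph.cycleGraph 6
  have target₂ : IsTargetLink G (0, 2) := ⟨by decide, by decide⟩
  have target₃ : IsTargetLink G (0, 3) := ⟨by decide, by decide⟩
  have regular : G.IsRegularOfDegree 2 := fun _ => SimpleGraph.cycleGraph_degree_three_le
  have common₂ : commonNbrCount G (0, 2) = 1 := by rw [commonNbrCount_eq_card_filter]; decide
  have common₃ : commonNbrCount G (0, 3) = 0 := by rw [commonNbrCount_eq_card_filter]; decide
  refine ⟨6, G, (0, 2), (0, 3), target₂, target₃,
    target₂.wl2LIndist_of_isRegularOfDegree target₃ regular regular (), fun h => ?_⟩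
  have count_eq := h.commonNbrCount_eq
  lia

theorem local_fwl2_stronger_than_local_wl2_general :
    (∀ (σ : Type u) (V V' : Type v) [Fintype V] [Fintype V']
        (G : SimpleGraph V) (l : V → σ) (G' : SimpleGraph V') (l' : V' → σ)
        (e : V × V) (e' : V' × V'),
        FWL2LIndist G l G' l' e e' → WL2LIndist G l G' l' e e') ∧
    (∃ (n : ℕ) (G : SimpleGraph (Fin n)) (e e' : Fin n × Fin n),
        IsTargetLink G e ∧ IsTargetLink G e' ∧
        WL2LIndist G (fun _ => ()) G (fun _ => ()) e e' ∧
        ¬ FWL2LIndist G (fun _ => ()) G (fun _ => ()) e e') :=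
  ⟨fun _ _ _ _ _ _ _ _ _ _ _ => FWL2LIndist.wl2LIndist, exists_wl2LIndist_and_not_fwl2LIndist⟩

/-- Theorem 4: local 2-FWL has stronger link discriminating power than local 2-WL. -/
theorem local_fwl2_stronger_than_local_wl2 :
    (∀ (σ : Type u) (V V' : Type v) [Fintype V] [Fintype V']
        (G : SimpleGraph V) (l : V → σ) (G' : SimpleGraph V') (l' : V' → σ)
        (e : V × V) (e' : V' × V'),
        IsTargetLink G e → IsTargetLink G' e' →
        FWL2LIndist G l G' l' e e' → WL2LIndist G l G' l' e e') ∧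
    (∃ (n n' : ℕ) (G : SimpleGraph (Fin n)) (G' : SimpleGraph (Fin n'))
        (e : Fin n × Fin n) (e' : Fin n' × Fin n'),
        IsTargetLink G e ∧ IsTargetLink G' e' ∧
        WL2LIndist G (fun _ => ()) G' (fun _ => ()) e e' ∧
        ¬ FWL2LIndist G (fun _ => ()) G' (fun _ => ()) e e') := by
  obtain ⟨refines, n, G, e, e', separates⟩ := local_fwl2_stronger_than_local_wl2_general.{u, v}
  exact ⟨fun σ V V' _ _ G l G' l' e e' _ _ => refines σ V V' G l G' l' e e',
    n, n, G, G, e, e', separates⟩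
end

section
/- (Theorem 6: incomparability of 1-WL with 0/1 labeling trick and local 2-FWL.) (i) There exist unlabeled graphs G, G' and target links (p,q) in G and (p',q') in G' that are 1-WL-with-0/1-labeling-indistinguishable but not 2-FWL_L-indistinguishable. (ii) There exist unlabeled graphs H, H' and target links (r,s) in H and (r',s') in H' that are 2-FWL_L-indistinguishable but not 1-WL-with-0/1-labeling-indistinguishable. Hence neither test has equal or stronger link discriminating power than the other. -/
open scoped Classical

universe u v

/-!
Both color refinements obey a bisimulation principle: a relation compatible with initial colors and
with the refinement step relates only objects of equal color.

(i) In the 6-cycle and in two disjoint triangles, mark two vertices that dominate every other vertex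
exactly once. Both graphs are 2-regular, so 1-WL sees only the marks. Local 2-FWL detects whether an
endpoint of the link lies on a triangle.

(ii) In a strongly regular graph the numbers of common neighbors depend only on the initial pair
color, so local 2-FWL does not separate any two target links. After marking `p` and `q`, their
common neighbors are the vertices with two marked neighbors, so 1-WL detects whether two of them are
adjacent. In the Shrikhande graph this happens for some target links and not for others.
-/

section MultisetRel

variable {α β : Type*} {s : Finset α} {t : Finset β}

theorem rel_val_of_card_eq {r : α → β → Prop} (hcard : s.card = t.card)
    (hr : ∀ a ∈ s, ∀ b ∈ t, r a b) : Multiset.Rel r s.val t.val := by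
  have hunit : s.val.map (fun _ => ()) = t.val.map (fun _ => ()) := by
    simpa only [Multiset.map_const', Finset.card_val] using congrArg (Multiset.replicate · ()) hcard
  exact (Multiset.rel_map.1 (Multiset.rel_eq.2 hunit)).mono fun a ha b hb _ => hr a ha b hb

theorem rel_val_of_rel_filter {r : α → β → Prop} (p : α → Prop) (q : β → Prop)
    [DecidablePred p] [DecidablePred q]
    (h : Multiset.Rel r (s.filter p).val (t.filter q).val)
    (h' : Multiset.Rel r (s.filter (¬ p ·)).val (t.filter (¬ q ·)).val) :
    Multiset.Rel r s.val t.val := by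
  simpa only [Finset.filter_val, Multiset.filter_add_not] using h.add h'

theorem rel_val_iff_of_card_filter_eq {p : α → Prop} {q : β → Prop} [DecidablePred p]
    [DecidablePred q] (hcard : s.card = t.card)
    (hfilter : (s.filter p).card = (t.filter q).card) :
    Multiset.Rel (fun a b => p a ↔ q b) s.val t.val := by
  have hnot : (s.filter (¬ p ·)).card = (t.filter (¬ q ·)).card := by
    have hs := s.card_filter_add_card_filter_not p
    have ht := t.card_filter_add_card_filter_not q
    lia
  refine rel_val_of_rel_filter p q (rel_val_of_card_eq hfilter ?_) (rel_val_of_card_eq hnot ?_) <;>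
    simp +contextual

theorem rel_val_eq_iff_eq_of_card_eq (hcard : s.card = t.card) {a : α} {b : β}
    (hmem : a ∈ s ↔ b ∈ t) : Multiset.Rel (fun x y => x = a ↔ y = b) s.val t.val := by
  refine rel_val_iff_of_card_filter_eq hcard ?_
  simp only [Finset.card_filter, Finset.sum_ite_eq', hmem]

theorem rel_val_union {r : α → β → Prop} {s' : Finset α} {t' : Finset β}
    (hinter : Multiset.Rel r (s ∩ s').val (t ∩ t').val)
    (hleft : Multiset.Rel r (s \ s').val (t \ t').val)
    (hright : Multiset.Rel r (s' \ s).val (t' \ t).val) :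
    Multiset.Rel r (s ∪ s').val (t ∪ t').val := by
  have hst : Multiset.Rel r s.val t.val :=
    rel_val_of_rel_filter (· ∈ s') (· ∈ t') (by simpa only [Finset.filter_mem_eq_inter])
      (by simpa only [Finset.filter_notMem_eq_sdiff])
  refine rel_val_of_rel_filter (· ∈ s) (· ∈ t) ?_ ?_
  · simpa [Finset.filter_mem_eq_inter] using hst
  · simpa [Finset.filter_notMem_eq_sdiff, Finset.union_sdiff_left] using hright

end MultisetRel

section ColorRefinement

variable {σ : Type u} {V V' : Type v}
  {G : SimpleGraph V} {l : V → σ} {G' : SimpleGraph V'} {l' : V' → σ}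

theorem adj_iff_of_pairInit_eq {e : V × V} {e' : V' × V'}
    (h : pairInit G l e = pairInit G' l' e') : G.Adj e.1 e.2 ↔ G'.Adj e'.1 e'.2 :=
  decide_eq_decide.1 (Prod.mk.inj (Prod.mk.inj (Prod.mk.inj h).2).2).1

theorem pairInit_const_eq_iff {a : σ} {e : V × V} {e' : V' × V'} :
    pairInit G (fun _ => a) e = pairInit G' (fun _ => a) e' ↔
      (G.Adj e.1 e.2 ↔ G'.Adj e'.1 e'.2) ∧ (e.1 = e.2 ↔ e'.1 = e'.2) := by
  simp [pairInit, PairColor0, Prod.ext_iff]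

variable [Fintype V] [Fintype V']

theorem wl1_eq_of_bisimulation {R : V → V' → Prop} (hlabel : ∀ v v', R v v' → l v = l' v')
    (hstep : ∀ v v', R v v' →
      Multiset.Rel R (G.neighborFinset v).val (G'.neighborFinset v').val)
    (t : ℕ) {v : V} {v' : V'} (hv : R v v') : wl1 G l t v = wl1 G' l' t v' := by
  induction t generalizing v v' with
  | zero => exact hlabel v v' hv
  | succ t ih =>
    refine Prod.ext (ih hv) (Multiset.rel_eq.1 (Multiset.rel_map.2 ?_))
    exact (hstep v v' hv).mono fun u _ u' _ hu => ih hu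

theorem fwl2L_eq_of_bisimulation {R : V × V → V' × V' → Prop}
    (hinit : ∀ e e', R e e' → pairInit G l e = pairInit G' l' e')
    (hstep : ∀ e e', R e e' →
      Multiset.Rel (fun u u' => R (u, e.2) (u', e'.2) ∧ R (e.1, u) (e'.1, u'))
        (Finset.univ.filter fun u => G.Adj u e.2 ∨ G.Adj e.1 u).val
        (Finset.univ.filter fun u' => G'.Adj u' e'.2 ∨ G'.Adj e'.1 u').val)
    (t : ℕ) {e : V × V} {e' : V' × V'} (he : R e e') : fwl2L G l t e = fwl2L G' l' t e' := by
  induction t generalizing e e' with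
  | zero => exact hinit e e' he
  | succ t ih =>
    refine Prod.ext (ih he) (Multiset.rel_eq.1 (Multiset.rel_map.2 ?_))
    exact (hstep e e' he).mono fun u _ u' _ hu => Prod.ext (ih hu.1) (ih hu.2)

theorem map_label_eq_of_wl1_one_eq {v : V} {v' : V'} (h : wl1 G l 1 v = wl1 G' l' 1 v') :
    (G.neighborFinset v).val.map l = (G'.neighborFinset v').val.map l' :=
  (Prod.mk.inj h).2

theorem exists_adj_wl1_eq {t : ℕ} {v u : V} {v' : V'}
    (h : wl1 G l (t + 1) v = wl1 G' l' (t + 1) v') (hu : G.Adj v u) :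
    ∃ u', G'.Adj v' u' ∧ wl1 G l t u = wl1 G' l' t u' := by
  have hmem : wl1 G l t u ∈ (G'.neighborFinset v').val.map (wl1 G' l' t) :=
    (Prod.mk.inj h).2 ▸ Multiset.mem_map_of_mem _ ((G.mem_neighborFinset v u).2 hu)
  obtain ⟨u', hu', heq⟩ := Multiset.mem_map.1 hmem
  exact ⟨u', (G'.mem_neighborFinset v' u').1 hu', heq.symm⟩

theorem pairInit_eq_of_fwl2L_eq {t : ℕ} {e : V × V} {e' : V' × V'}
    (h : fwl2L G l t e = fwl2L G' l' t e') : pairInit G l e = pairInit G' l' e' := by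
  induction t with
  | zero => exact h
  | succ t ih => exact ih (Prod.mk.inj h).1

theorem exists_fwl2L_eq {t : ℕ} {e : V × V} {e' : V' × V'} {u : V}
    (h : fwl2L G l (t + 1) e = fwl2L G' l' (t + 1) e') (hu : G.Adj u e.2 ∨ G.Adj e.1 u) :
    ∃ u', fwl2L G l t (u, e.2) = fwl2L G' l' t (u', e'.2) ∧
      fwl2L G l t (e.1, u) = fwl2L G' l' t (e'.1, u') := by
  have humem : u ∈ Finset.univ.filter fun u => G.Adj u e.2 ∨ G.Adj e.1 u := by simpa using hu
  have hmem := Multiset.mem_map_of_mem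
    (fun u => (fwl2L G l t (u, e.2), fwl2L G l t (e.1, u))) humem
  obtain ⟨u', -, heq⟩ := Multiset.mem_map.1 ((Prod.mk.inj h).2 ▸ hmem)
  exact ⟨u', (Prod.mk.inj heq).1.symm, (Prod.mk.inj heq).2.symm⟩

theorem FWL2LIndist.exists_triangle {e : V × V} {e' : V' × V'} (h : FWL2LIndist G l G' l' e e')
    (htri : ∃ u w, G.Adj u e.2 ∧ G.Adj w e.2 ∧ G.Adj u w) :
    ∃ u w, G'.Adj u e'.2 ∧ G'.Adj w e'.2 ∧ G'.Adj u w := by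
  obtain ⟨u, w, hu, hw, huw⟩ := htri
  obtain ⟨u', hcolor, -⟩ := exists_fwl2L_eq (h 2) (Or.inl hu)
  obtain ⟨w', hw', huw'⟩ := exists_fwl2L_eq hcolor (Or.inl hw)
  exact ⟨u', w', (adj_iff_of_pairInit_eq (pairInit_eq_of_fwl2L_eq hcolor)).1 hu,
    (adj_iff_of_pairInit_eq hw').1 hw, (adj_iff_of_pairInit_eq huw').1 huw⟩

end ColorRefinement

section LabelingTrick

variable {σ : Type u} {V V' : Type v} {G : SimpleGraph V} {G' : SimpleGraph V'}
  {l : V → σ} {l' : V' → σ} {e : V × V} {e' : V' × V'}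

section LabeledNbrCount

variable [DecidableEq V] [DecidableEq V'] [DecidableRel G.Adj] [DecidableRel G'.Adj]

/-- The number of endpoints of the link `e` adjacent to `v`, i.e. of neighbors of `v` marked `1` by
the labeling trick. -/
def labeledNbrCount (G : SimpleGraph V) [DecidableRel G.Adj] (e : V × V) (v : V) : ℕ :=
  (({e.1, e.2} : Finset V).filter (G.Adj v)).card

theorem labeledNbrCount_eq_two_iff (he : e.1 ≠ e.2) {v : V} :
    labeledNbrCount G e v = 2 ↔ G.Adj v e.1 ∧ G.Adj v e.2 := by
  rw [labeledNbrCount, ← Finset.card_pair he, Finset.card_filter_eq_iff]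
  simp

theorem card_filter_neighborFinset_eq_labeledNbrCount (G : SimpleGraph V) [DecidableRel G.Adj]
    (e : V × V) (v : V) [Fintype (G.neighborSet v)] [DecidablePred fun u => u = e.1 ∨ u = e.2] :
    ((G.neighborFinset v).filter (fun u => u = e.1 ∨ u = e.2)).card = labeledNbrCount G e v := by
  refine congrArg Finset.card (Finset.ext fun u => ?_)
  simp [and_comm]

variable [Fintype V] [Fintype V']

theorem wl1LabelIndist_of_isRegularOfDegree {d : ℕ} {a : σ} (hG : G.IsRegularOfDegree d)
    (hG' : G'.IsRegularOfDegree d)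
    (hcount : ∀ v v', (v = e.1 ∨ v = e.2 ↔ v' = e'.1 ∨ v' = e'.2) →
      labeledNbrCount G e v = labeledNbrCount G' e' v') :
    WL1LabelIndist G (fun _ => a) G' (fun _ => a) e e' := by
  have hwl1 (t : ℕ) {v : V} {v' : V'} (hv : v = e.1 ∨ v = e.2 ↔ v' = e'.1 ∨ v' = e'.2) :
      wl1 G (label01 (fun _ => a) e) t v = wl1 G' (label01 (fun _ => a) e') t v' := by
    refine wl1_eq_of_bisimulation (R := fun v v' => v = e.1 ∨ v = e.2 ↔ v' = e'.1 ∨ v' = e'.2)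
      (fun v v' h => ?_) (fun v v' h => ?_) t hv
    · exact Prod.ext rfl (decide_eq_decide.2 h)
    · refine rel_val_iff_of_card_filter_eq ?_ ?_
      · rw [SimpleGraph.card_neighborFinset_eq_degree, SimpleGraph.card_neighborFinset_eq_degree]
        convert (hG v).trans (hG' v').symm
      · rw [card_filter_neighborFinset_eq_labeledNbrCount,
          card_filter_neighborFinset_eq_labeledNbrCount]
        exact hcount v v' h
  exact fun t => ⟨hwl1 t (by simp), hwl1 t (by simp)⟩

theorem labeledNbrCount_eq_of_wl1_eq {v : V} {v' : V'}
    (h : wl1 G (label01 l e) 1 v = wl1 G' (label01 l' e') 1 v') :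
    labeledNbrCount G e v = labeledNbrCount G' e' v' := by
  have hcount := congrArg (Multiset.countP fun c => c.2 = true) (map_label_eq_of_wl1_one_eq h)
  simp only [Multiset.countP_map, label01, decide_eq_true_eq] at hcount
  rw [← card_filter_neighborFinset_eq_labeledNbrCount,
    ← card_filter_neighborFinset_eq_labeledNbrCount, Finset.card_def, Finset.card_def,
    Finset.filter_val, Finset.filter_val]
  convert hcount

end LabeledNbrCount

theorem WL1LabelIndist.exists_adj_common_neighbors [Fintype V] [Fintype V']
    (h : WL1LabelIndist G l G' l' e e') (he : e.1 ≠ e.2) (he' : e'.1 ≠ e'.2)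
    (hadj : ∃ u w, (G.Adj u e.1 ∧ G.Adj u e.2) ∧ (G.Adj w e.1 ∧ G.Adj w e.2) ∧ G.Adj u w) :
    ∃ u w, (G'.Adj u e'.1 ∧ G'.Adj u e'.2) ∧ (G'.Adj w e'.1 ∧ G'.Adj w e'.2) ∧ G'.Adj u w := by
  have hcommon {v : V} {v' : V'} (hv : G.Adj v e.1 ∧ G.Adj v e.2)
      (hcolor : wl1 G (label01 l e) 1 v = wl1 G' (label01 l' e') 1 v') :
      G'.Adj v' e'.1 ∧ G'.Adj v' e'.2 := by
    rw [← labeledNbrCount_eq_two_iff he', ← labeledNbrCount_eq_of_wl1_eq hcolor]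
    exact (labeledNbrCount_eq_two_iff he).2 hv
  obtain ⟨u, w, hu, hw, huw⟩ := hadj
  obtain ⟨u', -, hu'⟩ := exists_adj_wl1_eq (h 3).1 hu.1.symm
  obtain ⟨w', huw', hw'⟩ := exists_adj_wl1_eq hu' huw
  exact ⟨u', w', hcommon hu (Prod.mk.inj hu').1, hcommon hw hw', huw'⟩

end LabelingTrick

section StronglyRegular

variable {σ : Type u} {V V' : Type v} [Fintype V] [Fintype V'] {G : SimpleGraph V}
  {G' : SimpleGraph V'} {e : V × V} {e' : V' × V'}

theorem commonNbrCount_self (G : SimpleGraph V) [DecidableRel G.Adj] (v : V) :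
    commonNbrCount G (v, v) = G.degree v := by
  simp only [commonNbrCount, Finset.inter_self, SimpleGraph.card_neighborFinset_eq_degree]
  congr!

theorem card_neighborFinset_sdiff_eq {p q : V} {p' q' : V'}
    (hdeg : G.degree p = G'.degree p')
    (hcount : commonNbrCount G (p, q) = commonNbrCount G' (p', q')) :
    (G.neighborFinset p \ G.neighborFinset q).card =
      (G'.neighborFinset p' \ G'.neighborFinset q').card := by
  have hG := Finset.card_sdiff_add_card_inter (G.neighborFinset p) (G.neighborFinset q)
  have hG' := Finset.card_sdiff_add_card_inter (G'.neighborFinset p') (G'.neighborFinset q')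
  simp only [commonNbrCount] at hcount
  rw [SimpleGraph.card_neighborFinset_eq_degree] at hG hG'
  lia

theorem rel_val_neighborFinset_union {a : σ} {p q : V} {p' q' : V'}
    (hpair : pairInit G (fun _ => a) (p, q) = pairInit G' (fun _ => a) (p', q'))
    (hp : G.degree p = G'.degree p') (hq : G.degree q = G'.degree q')
    (hcount : commonNbrCount G (p, q) = commonNbrCount G' (p', q')) :
    Multiset.Rel (fun u u' =>
        pairInit G (fun _ => a) (u, q) = pairInit G' (fun _ => a) (u', q') ∧
          pairInit G (fun _ => a) (p, u) = pairInit G' (fun _ => a) (p', u'))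
      (G.neighborFinset p ∪ G.neighborFinset q).val
      (G'.neighborFinset p' ∪ G'.neighborFinset q').val := by
  obtain ⟨hadj, -⟩ := pairInit_const_eq_iff.1 hpair
  have hcount' : commonNbrCount G (q, p) = commonNbrCount G' (q', p') := by
    simpa only [commonNbrCount, Finset.inter_comm] using hcount
  simp only [pairInit_const_eq_iff]
  -- `q ∈ N(p) \ N(q)` and `p ∈ N(q) \ N(p)` exactly if `p` and `q` are adjacent, so on these two
  -- pieces it suffices to match `q` with `q'` and `p` with `p'`.
  refine rel_val_union (rel_val_of_card_eq hcount ?_)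
    ((rel_val_eq_iff_eq_of_card_eq (a := q) (b := q')
      (card_neighborFinset_sdiff_eq hp hcount) ?_).mono ?_)
    ((rel_val_eq_iff_eq_of_card_eq (a := p) (b := p')
      (card_neighborFinset_sdiff_eq hq hcount') ?_).mono ?_)
  all_goals
    simp only [Finset.mem_inter, Finset.mem_sdiff, Finset.mem_val, SimpleGraph.mem_neighborFinset]
    grind [SimpleGraph.irrefl, SimpleGraph.adj_comm]

theorem fwl2LIndist_of_commonNbrCount_eq {a : σ}
    (hcount : ∀ e e', pairInit G (fun _ => a) e = pairInit G' (fun _ => a) e' →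
      commonNbrCount G e = commonNbrCount G' e')
    (he : pairInit G (fun _ => a) e = pairInit G' (fun _ => a) e') :
    FWL2LIndist G (fun _ => a) G' (fun _ => a) e e' := by
  have hdeg (v : V) (v' : V') : G.degree v = G'.degree v' := by
    rw [← commonNbrCount_self, ← commonNbrCount_self]
    exact hcount _ _ (pairInit_const_eq_iff.2 (by simp))
  refine fun t => fwl2L_eq_of_bisimulation (fun _ _ h => h) (fun e e' h => ?_) t he
  convert rel_val_neighborFinset_union h (hdeg e.1 e'.1) (hdeg e.2 e'.2) (hcount e e' h) using 2 <;>
    ext u <;> simp [SimpleGraph.adj_comm, or_comm]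

theorem commonNbrCount_eq_card_commonNeighbors (G : SimpleGraph V) [DecidableRel G.Adj]
    (v w : V) : commonNbrCount G (v, w) = Fintype.card (G.commonNeighbors v w) := by
  rw [commonNbrCount, ← Set.toFinset_card]
  congr 1
  ext u
  simp [SimpleGraph.mem_commonNeighbors]

theorem commonNbrCount_eq_of_isSRGWith [DecidableRel G.Adj] {n k ℓ μ : ℕ}
    (hG : G.IsSRGWith n k ℓ μ) (e : V × V) :
    commonNbrCount G e = if e.1 = e.2 then k else if G.Adj e.1 e.2 then ℓ else μ := by
  obtain ⟨p, q⟩ := e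
  split_ifs with heq hadj
  · cases heq
    rw [commonNbrCount_self, hG.regular p]
  · rw [commonNbrCount_eq_card_commonNeighbors, hG.of_adj p q hadj]
  · rw [commonNbrCount_eq_card_commonNeighbors, hG.of_not_adj heq hadj]

theorem fwl2LIndist_of_isSRGWith [DecidableRel G.Adj] [DecidableRel G'.Adj] {n k ℓ μ : ℕ} {a : σ}
    (hG : G.IsSRGWith n k ℓ μ) (hG' : G'.IsSRGWith n k ℓ μ)
    (he : pairInit G (fun _ => a) e = pairInit G' (fun _ => a) e') :
    FWL2LIndist G (fun _ => a) G' (fun _ => a) e e' := by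
  refine fwl2LIndist_of_commonNbrCount_eq (fun f f' hf => ?_) he
  obtain ⟨hadj, heq⟩ := pairInit_const_eq_iff.1 hf
  simp only [commonNbrCount_eq_of_isSRGWith hG, commonNbrCount_eq_of_isSRGWith hG', hadj, heq]

end StronglyRegular

/-- The disjoint union of the triangles `{0, 2, 4}` and `{1, 3, 5}`. -/
abbrev twoTriangles : SimpleGraph (Fin 6) := SimpleGraph.circulantGraph {2}

/-- The 6-cycle, written as a circulant graph to match `twoTriangles`. -/
abbrev hexagon : SimpleGraph (Fin 6) := SimpleGraph.circulantGraph {1}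

theorem twoTriangles_isRegularOfDegree : twoTriangles.IsRegularOfDegree 2 := by
  unfold SimpleGraph.IsRegularOfDegree
  decide

theorem hexagon_isRegularOfDegree : hexagon.IsRegularOfDegree 2 := by
  unfold SimpleGraph.IsRegularOfDegree
  decide

theorem wl1LabelIndist_twoTriangles_hexagon :
    WL1LabelIndist twoTriangles (fun _ => ()) hexagon (fun _ => ()) (0, 3) (0, 3) :=
  wl1LabelIndist_of_isRegularOfDegree twoTriangles_isRegularOfDegree hexagon_isRegularOfDegree
    (by decide)

theorem not_fwl2LIndist_twoTriangles_hexagon :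
    ¬ FWL2LIndist twoTriangles (fun _ => ()) hexagon (fun _ => ()) (0, 3) (0, 3) := by
  intro h
  have htriangle : ∃ u w, twoTriangles.Adj u 3 ∧ twoTriangles.Adj w 3 ∧ twoTriangles.Adj u w :=
    ⟨1, 5, by decide⟩
  have hfree : ¬ ∃ u w, hexagon.Adj u 3 ∧ hexagon.Adj w 3 ∧ hexagon.Adj u w := by decide
  exact hfree (h.exists_triangle htriangle)

/-- Coordinates `i = b + 4 * a ↦ (a, b)` on the vertices of the Shrikhande graph. -/
def shrikhandeCoord : Fin 16 ≃ ZMod 4 × ZMod 4 :=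
  (finProdFinEquiv (m := 4) (n := 4)).symm

/-- The Shrikhande graph: the Cayley graph of `ℤ/4 × ℤ/4` with connection set
`±(1, 0), ±(0, 1), ±(1, 1)`, transported to `Fin 16`. -/
def shrikhande : SimpleGraph (Fin 16) :=
  (SimpleGraph.circulantGraph {(1, 0), (0, 1), (1, 1)}).comap shrikhandeCoord

instance : DecidableRel shrikhande.Adj :=
  inferInstanceAs (DecidableRel
    ((SimpleGraph.circulantGraph {(1, 0), (0, 1), (1, 1)}).comap shrikhandeCoord).Adj)

theorem shrikhande_isSRGWith : shrikhande.IsSRGWith 16 6 2 2 where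
  card := Fintype.card_fin 16
  regular := by
    unfold SimpleGraph.IsRegularOfDegree
    decide +kernel
  of_adj := by decide +kernel
  of_not_adj := by
    unfold Pairwise
    decide +kernel

theorem fwl2LIndist_shrikhande {e e' : Fin 16 × Fin 16} (he : IsTargetLink shrikhande e)
    (he' : IsTargetLink shrikhande e') :
    FWL2LIndist shrikhande (fun _ => ()) shrikhande (fun _ => ()) e e' :=
  fwl2LIndist_of_isSRGWith shrikhande_isSRGWith shrikhande_isSRGWith
    (pairInit_const_eq_iff.2 ⟨iff_of_false he.2 he'.2, iff_of_false he.1 he'.1⟩)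

theorem not_wl1LabelIndist_shrikhande :
    ¬ WL1LabelIndist shrikhande (fun _ => ()) shrikhande (fun _ => ()) (0, 6) (0, 8) := by
  intro h
  have hadj : ∃ u w, (shrikhande.Adj u 0 ∧ shrikhande.Adj u 6) ∧
      (shrikhande.Adj w 0 ∧ shrikhande.Adj w 6) ∧ shrikhande.Adj u w :=
    ⟨1, 5, by decide +kernel⟩
  have hnot : ¬ ∃ u w, (shrikhande.Adj u 0 ∧ shrikhande.Adj u 8) ∧
      (shrikhande.Adj w 0 ∧ shrikhande.Adj w 8) ∧ shrikhande.Adj u w := by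
    decide +kernel
  exact hnot (h.exists_adj_common_neighbors (by decide) (by decide) hadj)

/-- Theorem 6: 1-WL with 0/1 labeling trick and local 2-FWL are incomparable. -/
theorem labeling_trick_incomparable_local_fwl2 :
    (∃ (n n' : ℕ) (G : SimpleGraph (Fin n)) (G' : SimpleGraph (Fin n'))
        (e : Fin n × Fin n) (e' : Fin n' × Fin n'),
        IsTargetLink G e ∧ IsTargetLink G' e' ∧
        WL1LabelIndist G (fun _ => ()) G' (fun _ => ()) e e' ∧
        ¬ FWL2LIndist G (fun _ => ()) G' (fun _ => ()) e e') ∧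
    (∃ (m m' : ℕ) (H : SimpleGraph (Fin m)) (H' : SimpleGraph (Fin m'))
        (f : Fin m × Fin m) (f' : Fin m' × Fin m'),
        IsTargetLink H f ∧ IsTargetLink H' f' ∧
        FWL2LIndist H (fun _ => ()) H' (fun _ => ()) f f' ∧
        ¬ WL1LabelIndist H (fun _ => ()) H' (fun _ => ()) f f') := by
  have he : IsTargetLink twoTriangles (0, 3) := ⟨by decide, by decide⟩
  have he' : IsTargetLink hexagon (0, 3) := ⟨by decide, by decide⟩
  have hf : IsTargetLink shrikhande (0, 6) := ⟨by decide, by decide +kernel⟩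
  have hf' : IsTargetLink shrikhande (0, 8) := ⟨by decide, by decide +kernel⟩
  exact ⟨⟨6, 6, twoTriangles, hexagon, (0, 3), (0, 3), he, he',
      wl1LabelIndist_twoTriangles_hexagon, not_fwl2LIndist_twoTriangles_hexagon⟩,
    ⟨16, 16, shrikhande, shrikhande, (0, 6), (0, 8), hf, hf',
      fwl2LIndist_shrikhande hf hf', not_wl1LabelIndist_shrikhande⟩⟩
end

section
/- (Simulation direction of Theorem 1.) For every label set Σ, all labeled graphs G = (V,E,l) and G' = (V',E',l') over Σ, and all target links (p,q) in G and (p',q') in G': if (p,q) and (p',q') are 2-WL-indistinguishable, then they are 1-WL-indistinguishable. Equivalently, any two links distinguished by 1-WL are also distinguished by 2-WL. -/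
open scoped Classical

universe u v

/-!
The 1-WL colors of `p` and `q` after `t` rounds are a function of the 2-WL color of `(p, q)` after
`t` rounds, and this function does not depend on the graph. The point is that the adjacency
indicator in the initial color is never forgotten: in the multiset of colors of the pairs `(p, v)`,
it tells which entries come from neighbors `v` of `p`, and these entries determine the multiset
of 1-WL colors that refines the color of `p`. Columns `(u, q)` do the same for `q`.
-/

universe w

namespace WL2Color

variable {σ : Type u} {V : Type v}

/-- The adjacency indicator `1_{(p,q)∈E}` stored in a 2-WL color of `(p, q)`, read off from the
initial color kept in its innermost first component. -/
def adj : (t : ℕ) → WL2Color σ t → Bool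
  | 0, (_, _, isAdj, _) => isAdj
  | t + 1, (c, _, _) => adj t c

/-- The 1-WL colors of `p` and `q` after `t` rounds, decoded from the 2-WL color of `(p, q)` after
`t` rounds. The two are decoded together because the neighbors of `p` appear as second
endpoints and those of `q` as first endpoints. -/
def endpointColors : (t : ℕ) → WL2Color σ t → WL1Color σ t × WL1Color σ t
  | 0, (labelFst, labelSnd, _, _) => (labelFst, labelSnd)
  | t + 1, (c, column, row) =>
      (((endpointColors t c).1,
          (row.filter fun d => adj t d).map fun d => (endpointColors t d).2),
        ((endpointColors t c).2,
          (column.filter fun d => adj t d).map fun d => (endpointColors t d).1))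

variable [Fintype V] (G : SimpleGraph V) (l : V → σ)

theorem adj_wl2 (t : ℕ) (e : V × V) : adj t (wl2 G l t e) = decide (G.Adj e.1 e.2) := by
  induction t with
  | zero => rfl
  | succ _ ih => exact ih

theorem filter_adj_map_wl2_row (t : ℕ) (p : V) :
    (Finset.univ.val.map fun v => wl2 G l t (p, v)).filter (fun c => adj t c) =
      (G.neighborFinset p).val.map fun v => wl2 G l t (p, v) := by
  simp only [Multiset.filter_map, Function.comp_def, adj_wl2, decide_eq_true_eq,
    SimpleGraph.neighborFinset_eq_filter, Finset.filter_val]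

theorem filter_adj_map_wl2_column (t : ℕ) (q : V) :
    (Finset.univ.val.map fun u => wl2 G l t (u, q)).filter (fun c => adj t c) =
      (G.neighborFinset q).val.map fun u => wl2 G l t (u, q) := by
  simp only [Multiset.filter_map, Function.comp_def, adj_wl2, decide_eq_true_eq,
    SimpleGraph.neighborFinset_eq_filter, Finset.filter_val, G.adj_comm q]

theorem endpointColors_wl2 (t : ℕ) (e : V × V) :
    endpointColors t (wl2 G l t e) = (wl1 G l t e.1, wl1 G l t e.2) := by
  induction t generalizing e with
  | zero => rfl
  | succ t ih =>
    simp only [wl2, endpointColors, filter_adj_map_wl2_row, filter_adj_map_wl2_column,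
      Multiset.map_map, Function.comp_def, ih, wl1]

end WL2Color

theorem wl2_indist_imp_wl1_indist_general {σ : Type u} {V : Type v} {V' : Type w}
    [Fintype V] [Fintype V'] {G : SimpleGraph V} {l : V → σ} {G' : SimpleGraph V'} {l' : V' → σ}
    {e : V × V} {e' : V' × V'} {t : ℕ} (h : wl2 G l t e = wl2 G' l' t e') :
    wl1 G l t e.1 = wl1 G' l' t e'.1 ∧ wl1 G l t e.2 = wl1 G' l' t e'.2 := by
  rw [← Prod.mk.injEq, ← WL2Color.endpointColors_wl2, ← WL2Color.endpointColors_wl2, h]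

/-- Simulation direction of Theorem 1: 2-WL-indistinguishable target links are
1-WL-indistinguishable. -/
theorem wl2_indist_imp_wl1_indist :
    ∀ (σ : Type u) (V V' : Type v) [Fintype V] [Fintype V']
      (G : SimpleGraph V) (l : V → σ) (G' : SimpleGraph V') (l' : V' → σ)
      (e : V × V) (e' : V' × V'),
      IsTargetLink G e → IsTargetLink G' e' →
      WL2Indist G l G' l' e e' → WL1Indist G l G' l' e e' := by
  intro σ V V' _ _ G l G' l' e e' _ _ h t
  exact wl2_indist_imp_wl1_indist_general (h t)
end

section
/- (Per-iteration refinement of 2-WL by 2-FWL, the inductive claim in the proof of Theorem 2.) For every label set Σ, all labeled graphs G = (V,E,l) and G' = (V',E',l') over Σ, all ordered pairs (p,q) ∈ V × V and (p',q') ∈ V' × V', and every iteration t ≥ 0: if the 2-FWL colors satisfy c_Fᵗ(p,q) = c_Fᵗ(p',q'), then the 2-WL colors satisfy c₂ᵗ(p,q) = c₂ᵗ(p',q'). -/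
open scoped Classical

universe u v

namespace FWLColor

/-- The decoding of 2-FWL colors into 2-WL colors: at each iteration, the multiset of pairs of
colors is replaced by its two marginal multisets, in the order used by `wl2`. It takes neither
the graph nor the labeling as an argument, so that it applies to colors coming from different
graphs. -/
def toWL2Color {σ : Type u} : (t : ℕ) → FWLColor σ t → WL2Color σ t
  | 0, c => c
  | t + 1, (c, pairs) =>
      (toWL2Color t c,
        pairs.map (fun pair => toWL2Color t pair.1),
        pairs.map (fun pair => toWL2Color t pair.2))

theorem toWL2Color_fwl2 {σ : Type u} {V : Type v} [Fintype V] (G : SimpleGraph V) (l : V → σ)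
    (t : ℕ) (e : V × V) : toWL2Color t (fwl2 G l t e) = wl2 G l t e := by
  induction t generalizing e with
  | zero => rfl
  | succ t ih =>
    have fst_marginal :
        (fwl2 G l (t + 1) e).2.map (fun pair => toWL2Color t pair.1) =
          Finset.univ.val.map (fun u => wl2 G l t (u, e.2)) := by
      simp only [fwl2, Multiset.map_map, Function.comp_def, ih]
    have snd_marginal :
        (fwl2 G l (t + 1) e).2.map (fun pair => toWL2Color t pair.2) =
          Finset.univ.val.map (fun v => wl2 G l t (e.1, v)) := by
      simp only [fwl2, Multiset.map_map, Function.comp_def, ih]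
    exact Prod.ext (ih e) (Prod.ext fst_marginal snd_marginal)

end FWLColor

/-- Per-iteration refinement of 2-WL by 2-FWL (inductive claim in the proof of Theorem 2). -/
theorem fwl2_refines_wl2_per_iteration :
    ∀ (σ : Type u) (V V' : Type v) [Fintype V] [Fintype V']
      (G : SimpleGraph V) (l : V → σ) (G' : SimpleGraph V') (l' : V' → σ)
      (e : V × V) (e' : V' × V') (t : ℕ),
      fwl2 G l t e = fwl2 G' l' t e' → wl2 G l t e = wl2 G' l' t e' := by
  intro σ V V' _ _ G l G' l' e e' t h
  calc
    wl2 G l t e = FWLColor.toWL2Color t (fwl2 G l t e) := (FWLColor.toWL2Color_fwl2 G l t e).symm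
    _ = FWLColor.toWL2Color t (fwl2 G' l' t e') := congrArg (FWLColor.toWL2Color t) h
    _ = wl2 G' l' t e' := FWLColor.toWL2Color_fwl2 G' l' t e'
end

section
/- (2-WL refines local 2-WL, used to derive Theorem 1 from Theorem 3.) For every label set Σ, all labeled graphs G = (V,E,l) and G' = (V',E',l') over Σ, and all ordered pairs (p,q) ∈ V × V and (p',q') ∈ V' × V': if (p,q) and (p',q') are 2-WL-indistinguishable, then they are 2-WL_L-indistinguishable. Equivalently, whenever local 2-WL can discriminate two links, 2-WL can also discriminate them. -/
open scoped Classical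

universe u v

/-! A 2-WL color contains the initial color of its pair, hence tells whether the pair is an edge.
The neighbor multisets of local 2-WL are therefore the multisets of 2-WL filtered by adjacency, so
at every iteration the local color is a function of the plain color that does not depend on the
graph. -/

theorem multiset_map_filter_map_congr {α β γ : Type*} {f : α → β} {g : β → γ} {k : α → γ}
    {p : β → Prop} {q : α → Prop} [DecidablePred p] [DecidablePred q] (s : Multiset α)
    (hpq : ∀ a ∈ s, p (f a) ↔ q a) (hgk : ∀ a ∈ s, q a → g (f a) = k a) :
    ((s.map f).filter p).map g = (s.filter q).map k := by
  rw [Multiset.filter_map, Multiset.map_map, Multiset.filter_congr (p := p ∘ f) hpq]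
  exact Multiset.map_congr rfl fun a ha =>
    hgk a (Multiset.mem_of_mem_filter ha) (Multiset.of_mem_filter ha)

namespace WL2Color

variable {σ : Type u}

/-- The color belongs to an adjacent pair, as read off from the adjacency indicator of the initial
pair color, which every refinement step carries along in its first component. -/
def IsAdj : {t : ℕ} → WL2Color σ t → Prop
  | 0, c => c.2.2.1 = true
  | _ + 1, c => IsAdj c.1

/-- The local 2-WL color determined by a plain 2-WL color: colors of non-adjacent pairs are
discarded from the multisets at every level. -/
noncomputable def localize : {t : ℕ} → WL2Color σ t → WL2Color σ t
  | 0, c => c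
  | _ + 1, c =>
      (localize c.1, (c.2.1.filter IsAdj).map localize, (c.2.2.filter IsAdj).map localize)

end WL2Color

section

variable {σ : Type u} {V : Type v} [Fintype V] (G : SimpleGraph V) (l : V → σ)

theorem isAdj_wl2_iff (t : ℕ) (e : V × V) : (wl2 G l t e).IsAdj ↔ G.Adj e.1 e.2 := by
  induction t with
  | zero => exact decide_eq_true_iff
  | succ _ ih => exact ih

theorem localize_wl2 (t : ℕ) (e : V × V) : (wl2 G l t e).localize = wl2L G l t e := by
  induction t generalizing e with
  | zero => rfl
  | succ t ih =>
    have localize_map_wl2 (pair : V → V × V) :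
        ((Finset.univ.val.map fun w => wl2 G l t (pair w)).filter WL2Color.IsAdj).map
            WL2Color.localize =
          (Finset.univ.filter fun w => G.Adj (pair w).1 (pair w).2).val.map
            fun w => wl2L G l t (pair w) :=
      multiset_map_filter_map_congr _ (fun w _ => isAdj_wl2_iff G l t (pair w))
        fun w _ _ => ih (pair w)
    exact Prod.ext (ih e)
      (Prod.ext (localize_map_wl2 fun u => (u, e.2)) (localize_map_wl2 fun v => (e.1, v)))

end

theorem wl2_refines_local_wl2_general {σ : Type u} {V : Type v} {V' : Type*}
    [Fintype V] [Fintype V'] {G : SimpleGraph V} {l : V → σ} {G' : SimpleGraph V'} {l' : V' → σ}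
    {e : V × V} {e' : V' × V'} {t : ℕ} (h : wl2 G l t e = wl2 G' l' t e') :
    wl2L G l t e = wl2L G' l' t e' := by
  rw [← localize_wl2, h, localize_wl2]

/-- 2-WL refines local 2-WL. -/
theorem wl2_refines_local_wl2 :
    ∀ (σ : Type u) (V V' : Type v) [Fintype V] [Fintype V']
      (G : SimpleGraph V) (l : V → σ) (G' : SimpleGraph V') (l' : V' → σ)
      (e : V × V) (e' : V' × V'),
      WL2Indist G l G' l' e e' → WL2LIndist G l G' l' e e' := by
  intro σ V V' _ _ G l G' l' e e' h t
  exact wl2_refines_local_wl2_general (h t)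
end

section
/- (2-FWL refines local 2-FWL, since 2-FWL's global neighborhood is a superset of that of 2-FWL_L.) For every label set Σ, all labeled graphs G = (V,E,l) and G' = (V',E',l') over Σ, and all ordered pairs (p,q) ∈ V × V and (p',q') ∈ V' × V': if (p,q) and (p',q') are 2-FWL-indistinguishable, then they are 2-FWL_L-indistinguishable. Equivalently, whenever local 2-FWL can discriminate two links, 2-FWL can also discriminate them. -/
open scoped Classical

universe u v

/-! A 2-FWL color remembers all earlier colors of its pair, hence the adjacency bit of the initial
color. Each entry `(c_Fᵗ(u,q), c_Fᵗ(p,u))` of a 2-FWL multiset therefore reveals whether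
`(u,q) ∈ E` or `(p,u) ∈ E`, so the local multiset is obtained from the global one by filtering, and
`c_FLᵗ(p,q)` is a function of `c_Fᵗ(p,q)` that does not depend on the graph. -/

universe w

namespace FWLColor

variable {σ : Type u}

/-- The adjacency bit of the initial pair color that a color of round `t` refines. -/
def adj : {t : ℕ} → FWLColor σ t → Bool
  | 0, c => c.2.2.1
  | t + 1, c => adj (t := t) c.1

/-- The local 2-FWL color determined by a 2-FWL color: the multiset of every round keeps only the
pairs of colors of which at least one belongs to an edge. -/
def toLocal : {t : ℕ} → FWLColor σ t → FWLColor σ t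
  | 0, c => c
  | t + 1, c =>
      (toLocal (t := t) c.1,
        (c.2.filter fun x => x.1.adj ∨ x.2.adj).map (Prod.map toLocal toLocal))

end FWLColor

section Refinement

variable {σ : Type u} {V : Type v} [Fintype V] (G : SimpleGraph V) (l : V → σ)

theorem adj_fwl2 (t : ℕ) (e : V × V) : (fwl2 G l t e).adj ↔ G.Adj e.1 e.2 := by
  induction t with
  | zero => exact decide_eq_true_iff
  | succ _ ih => exact ih

theorem filter_adj_map_fwl2 (t : ℕ) (p q : V) :
    ((Finset.univ.val.map fun u => (fwl2 G l t (u, q), fwl2 G l t (p, u))).filter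
        fun c => c.1.adj ∨ c.2.adj) =
      (Finset.univ.filter fun u => G.Adj u q ∨ G.Adj p u).val.map
        fun u => (fwl2 G l t (u, q), fwl2 G l t (p, u)) := by
  rw [Multiset.filter_map, Finset.filter_val]
  congr 1
  exact Multiset.filter_congr fun u _ => or_congr (adj_fwl2 G l t (u, q)) (adj_fwl2 G l t (p, u))

theorem toLocal_fwl2 (t : ℕ) (e : V × V) : (fwl2 G l t e).toLocal = fwl2L G l t e := by
  induction t generalizing e with
  | zero => rfl
  | succ t ih =>
    simp only [fwl2, fwl2L, FWLColor.toLocal, filter_adj_map_fwl2, Multiset.map_map,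
      Function.comp_def, Prod.map_apply, ih]
    rfl

variable {V' : Type w} [Fintype V'] {G l} {G' : SimpleGraph V'} {l' : V' → σ}

theorem fwl2_refines_local_fwl2_general {t : ℕ} {e : V × V} {e' : V' × V'}
    (h : fwl2 G l t e = fwl2 G' l' t e') : fwl2L G l t e = fwl2L G' l' t e' := by
  rw [← toLocal_fwl2, h, toLocal_fwl2]

end Refinement

/-- 2-FWL refines local 2-FWL. -/
theorem fwl2_refines_local_fwl2 :
    ∀ (σ : Type u) (V V' : Type v) [Fintype V] [Fintype V']
      (G : SimpleGraph V) (l : V → σ) (G' : SimpleGraph V') (l' : V' → σ)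
      (e : V × V) (e' : V' × V'),
      FWL2Indist G l G' l' e e' → FWL2LIndist G l G' l' e e' := by
  intro σ V V' _ _ G l G' l' e e' h t
  exact fwl2_refines_local_fwl2_general (h t)
end

section
/- (Table 1 entry: 2-FWL has stronger link discriminating power than local 2-FWL.) (i) For every label set Σ, all labeled graphs G = (V,E,l) and G' = (V',E',l') over Σ, and all target links (p,q) in G and (p',q') in G': if (p,q) and (p',q') are 2-FWL-indistinguishable, then they are 2-FWL_L-indistinguishable. (ii) There exist unlabeled graphs G, G' and target links (p,q) in G and (p',q') in G' that are 2-FWL_L-indistinguishable but not 2-FWL-indistinguishable. -/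
open scoped Classical

universe u v

/-!
The 2-FWL color of a pair remembers its initial color, hence whether each middle vertex `u` is
adjacent to an endpoint. Discarding the other middle vertices, round after round, turns the 2-FWL
color into the local one, so the local color is a function of the 2-FWL color.

On the other hand, local 2-FWL never leaves the connected components of the two endpoints, so it
cannot see vertices added in new components, whereas one round of 2-FWL already counts all vertices.
-/

namespace FWLColor

variable {σ : Type u}

/-- The initial pair color from which a (local) 2-FWL color was refined. -/
def init : {t : ℕ} → FWLColor σ t → PairColor0 σ
  | 0, c => c
  | _ + 1, c => init c.1

/-- The indicator, recorded in a (local) 2-FWL color, that the endpoints of the pair are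
adjacent. -/
def isEdge {t : ℕ} (c : FWLColor σ t) : Bool := c.init.2.2.1

/-- The local 2-FWL color determined by a 2-FWL color: at every round, keep only the middle vertices
adjacent to an endpoint. -/
def localize : {t : ℕ} → FWLColor σ t → FWLColor σ t
  | 0, c => c
  | _ + 1, c =>
      (localize c.1,
        (c.2.filter fun d => d.1.isEdge ∨ d.2.isEdge).map (Prod.map localize localize))

end FWLColor

section

variable {σ : Type u} {V : Type v} {V' : Type*}

theorem pairInit_map_embedding {G : SimpleGraph V} {G' : SimpleGraph V'} (f : G ↪g G')
    (l' : V' → σ) (e : V × V) : pairInit G' l' (e.map f f) = pairInit G (l' ∘ f) e :=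
  congrArg (fun b => (l' (f e.1), l' (f e.2), b)) <|
    Prod.ext (decide_eq_decide.mpr f.map_adj_iff) (decide_eq_decide.mpr f.injective.eq_iff)

variable [Fintype V] [Fintype V']

theorem init_fwl2 (G : SimpleGraph V) (l : V → σ) (t : ℕ) (e : V × V) :
    (fwl2 G l t e).init = pairInit G l e := by
  induction t with
  | zero => rfl
  | succ _ ih => exact ih

theorem isEdge_fwl2_iff (G : SimpleGraph V) (l : V → σ) (t : ℕ) (e : V × V) :
    (fwl2 G l t e).isEdge ↔ G.Adj e.1 e.2 := by
  rw [FWLColor.isEdge, init_fwl2]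
  exact decide_eq_true_iff

theorem localize_fwl2 (G : SimpleGraph V) (l : V → σ) (t : ℕ) (e : V × V) :
    (fwl2 G l t e).localize = fwl2L G l t e := by
  induction t generalizing e with
  | zero => rfl
  | succ t ih =>
    refine Prod.ext (ih e) ?_
    simp only [fwl2, fwl2L, FWLColor.localize, Multiset.filter_map, Multiset.map_map,
      Function.comp_def, Prod.map, isEdge_fwl2_iff, ih, Finset.filter_val]

theorem fwl2L_eq_of_fwl2_eq {G : SimpleGraph V} {l : V → σ} {G' : SimpleGraph V'} {l' : V' → σ}
    {t : ℕ} {e : V × V} {e' : V' × V'} (h : fwl2 G l t e = fwl2 G' l' t e') :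
    fwl2L G l t e = fwl2L G' l' t e' := by
  rw [← localize_fwl2, h, localize_fwl2]

theorem card_eq_of_fwl2_succ_eq {G : SimpleGraph V} {l : V → σ} {G' : SimpleGraph V'}
    {l' : V' → σ} {t : ℕ} {e : V × V} {e' : V' × V'}
    (h : fwl2 G l (t + 1) e = fwl2 G' l' (t + 1) e') : Fintype.card V = Fintype.card V' := by
  simpa [fwl2] using congrArg (fun c => Multiset.card c.2) h

theorem filter_adj_map_embedding {G : SimpleGraph V} {G' : SimpleGraph V'} (f : G ↪g G')
    (hf : ∀ v w, G'.Adj (f v) w → w ∈ Set.range f) (p q : V) :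
    ({u | G'.Adj u (f q) ∨ G'.Adj (f p) u} : Finset V') =
      ({u | G.Adj u q ∨ G.Adj p u} : Finset V).map f.toEmbedding := by
  ext w
  simp only [Finset.mem_filter_univ, Finset.mem_map]
  constructor
  · intro hw
    obtain ⟨u, rfl⟩ : w ∈ Set.range f := hw.elim (fun h => hf q w h.symm) (hf p w)
    exact ⟨u, by simpa only [f.map_adj_iff] using hw, rfl⟩
  · rintro ⟨u, hu, rfl⟩
    exact hu.imp f.map_adj_iff.mpr f.map_adj_iff.mpr

theorem fwl2L_map_embedding {G : SimpleGraph V} {G' : SimpleGraph V'} (f : G ↪g G')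
    (hf : ∀ v w, G'.Adj (f v) w → w ∈ Set.range f) (l' : V' → σ) (t : ℕ) (e : V × V) :
    fwl2L G' l' t (e.map f f) = fwl2L G (l' ∘ f) t e := by
  induction t generalizing e with
  | zero => exact pairInit_map_embedding f l' e
  | succ t ih =>
    have ih' (p q : V) : fwl2L G' l' t (f p, f q) = fwl2L G (l' ∘ f) t (p, q) := ih (p, q)
    refine Prod.ext (ih e) ?_
    simp only [fwl2L, Prod.map_fst, Prod.map_snd, filter_adj_map_embedding f hf,
      Finset.map_val, Multiset.map_map, Function.comp_apply, RelEmbedding.coe_toEmbedding, ih']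

end

theorem fwl2_stronger_than_local_fwl2_general :
    (∀ (σ : Type u) (V V' : Type v) [Fintype V] [Fintype V']
        (G : SimpleGraph V) (l : V → σ) (G' : SimpleGraph V') (l' : V' → σ)
        (e : V × V) (e' : V' × V'),
        FWL2Indist G l G' l' e e' → FWL2LIndist G l G' l' e e') ∧
    (∀ (σ : Type u) (V V' : Type v) [Fintype V] [Fintype V']
        (G : SimpleGraph V) (G' : SimpleGraph V') (f : G ↪g G') (l' : V' → σ) (e : V × V),
        (∀ v w, G'.Adj (f v) w → w ∈ Set.range f) → ¬ Function.Surjective f →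
        FWL2LIndist G (l' ∘ f) G' l' e (e.map f f) ∧
        ¬ FWL2Indist G (l' ∘ f) G' l' e (e.map f f)) := by
  refine ⟨fun σ V V' _ _ G l G' l' e e' h t => fwl2L_eq_of_fwl2_eq (h t),
    fun σ V V' _ _ G G' f l' e hf hsurj =>
      ⟨fun t => (fwl2L_map_embedding f hf l' t e).symm, fun h => hsurj ?_⟩⟩
  have hcard : Fintype.card V = Fintype.card V' := card_eq_of_fwl2_succ_eq (h 1)
  exact ((Fintype.bijective_iff_injective_and_card f).mpr ⟨f.injective, hcard⟩).surjective

/-- Table 1 entry: 2-FWL has stronger link discriminating power than local 2-FWL. -/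
theorem fwl2_stronger_than_local_fwl2 :
    (∀ (σ : Type u) (V V' : Type v) [Fintype V] [Fintype V']
        (G : SimpleGraph V) (l : V → σ) (G' : SimpleGraph V') (l' : V' → σ)
        (e : V × V) (e' : V' × V'),
        IsTargetLink G e → IsTargetLink G' e' →
        FWL2Indist G l G' l' e e' → FWL2LIndist G l G' l' e e') ∧
    (∃ (n n' : ℕ) (G : SimpleGraph (Fin n)) (G' : SimpleGraph (Fin n'))
        (e : Fin n × Fin n) (e' : Fin n' × Fin n'),
        IsTargetLink G e ∧ IsTargetLink G' e' ∧
        FWL2LIndist G (fun _ => ()) G' (fun _ => ()) e e' ∧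
        ¬ FWL2Indist G (fun _ => ()) G' (fun _ => ()) e e') := by
  obtain ⟨hlocal, hglobal⟩ := fwl2_stronger_than_local_fwl2_general.2 Unit (Fin 2) (Fin 3) ⊥ ⊥
    ⟨Fin.castSuccEmb, by simp⟩ (fun _ => ()) (0, 1) (by simp) (by decide)
  exact ⟨fun σ V V' _ _ G l G' l' e e' _ _ =>
      fwl2_stronger_than_local_fwl2_general.1 σ V V' G l G' l' e e',
    2, 3, ⊥, ⊥, (0, 1), (0, 1), by simp [IsTargetLink], by simp [IsTargetLink], hlocal, hglobal⟩
end

section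
/- (Table 1 entry: 2-WL has stronger link discriminating power than local 2-WL.) (i) For every label set Σ, all labeled graphs G = (V,E,l) and G' = (V',E',l') over Σ, and all target links (p,q) in G and (p',q') in G': if (p,q) and (p',q') are 2-WL-indistinguishable, then they are 2-WL_L-indistinguishable. (ii) There exist unlabeled graphs G, G' and target links (p,q) in G and (p',q') in G' that are 2-WL_L-indistinguishable but not 2-WL-indistinguishable. -/
open scoped Classical

universe u v

/-!
Every 2-WL color remembers its initial color, hence whether its pair is an edge. Filtering the two
color multisets of each round by this indicator turns a 2-WL color into the 2-WL_L color of the same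
pair, so 2-WL refines 2-WL_L round by round. Conversely, 2-WL_L never gets past a pair of isolated
vertices, whereas 2-WL reads off the degrees of all vertices within two rounds.
-/

universe w

open SimpleGraph

namespace WL2Color

variable {σ : Type u}

/-- The edge indicator of a pair, read off from its color after `t` rounds. -/
def IsEdge : (t : ℕ) → WL2Color σ t → Prop
  | 0, c => c.2.2.1 = true
  | t + 1, c => IsEdge t c.1

/-- The translation of plain 2-WL colors into local 2-WL colors, which discards the colors of
non-edges from both multisets of every round. -/
noncomputable def toLocal : (t : ℕ) → WL2Color σ t → WL2Color σ t
  | 0, c => c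
  | t + 1, c =>
      (toLocal t c.1,
        (c.2.1.filter (IsEdge t)).map (toLocal t),
        (c.2.2.filter (IsEdge t)).map (toLocal t))

/-- The degree of the second vertex of a pair, read off from the plain 2-WL color of the pair: the
number of edges `(u, q)` contributing to the first multiset of the color of `(p, q)`. -/
noncomputable def degreeSnd {t : ℕ} (c : WL2Color σ (t + 1)) : ℕ :=
  c.2.1.countP (IsEdge t)

end WL2Color

section

variable {σ : Type u} {V : Type v} {V' : Type w} {G : SimpleGraph V} {l : V → σ}
  {G' : SimpleGraph V'} {l' : V' → σ} {e : V × V} {e' : V' × V'} {t : ℕ}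

lemma IsTargetLink.pairInit_eq (he : IsTargetLink G e) (he' : IsTargetLink G' e')
    (h₁ : l e.1 = l' e'.1) (h₂ : l e.2 = l' e'.2) : pairInit G l e = pairInit G' l' e' := by
  simp only [pairInit, he.1, he.2, he'.1, he'.2, h₁, h₂]
  rfl

variable [Fintype V] [Fintype V']

lemma isEdge_wl2_iff : (wl2 G l t e).IsEdge ↔ G.Adj e.1 e.2 := by
  induction t with
  | zero => exact decide_eq_true_iff
  | succ _ ih => exact ih

lemma toLocal_wl2 : (wl2 G l t e).toLocal = wl2L G l t e := by
  induction t generalizing e with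
  | zero => rfl
  | succ t ih =>
    simp only [WL2Color.toLocal, wl2, wl2L, Multiset.filter_map, Multiset.map_map,
      Function.comp_def, isEdge_wl2_iff, ih, Finset.filter_val]
    congr!

lemma wl2L_eq_of_wl2_eq (h : wl2 G l t e = wl2 G' l' t e') : wl2L G l t e = wl2L G' l' t e' := by
  rw [← toLocal_wl2, ← toLocal_wl2, h]

lemma degreeSnd_wl2 [Fintype (G.neighborSet e.2)] :
    (wl2 G l (t + 1) e).degreeSnd = G.degree e.2 := by
  have neighbors_eq : G.neighborFinset e.2 = Finset.univ.filter (G.Adj · e.2) := by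
    ext u
    simp [G.adj_comm]
  rw [← card_neighborFinset_eq_degree, neighbors_eq]
  simp only [WL2Color.degreeSnd, wl2, Multiset.countP_map, isEdge_wl2_iff]
  rfl

lemma map_degreeSnd_wl2 [G.LocallyFinite] :
    (wl2 G l (t + 2) e).2.2.map WL2Color.degreeSnd = Finset.univ.val.map (G.degree ·) := by
  change (Finset.univ.val.map fun v => wl2 G l (t + 1) (e.1, v)).map WL2Color.degreeSnd = _
  simp only [Multiset.map_map, Function.comp_def, degreeSnd_wl2]

lemma map_degree_eq_of_wl2_eq [G.LocallyFinite] [G'.LocallyFinite]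
    (h : wl2 G l (t + 2) e = wl2 G' l' (t + 2) e') :
    Finset.univ.val.map (G.degree ·) = Finset.univ.val.map (G'.degree ·) := by
  rw [← map_degreeSnd_wl2 (l := l) (e := e) (t := t), h, map_degreeSnd_wl2]

lemma eq_bot_of_wl2_bot_eq (h : wl2 (⊥ : SimpleGraph V) l (t + 2) e = wl2 G' l' (t + 2) e') :
    G' = ⊥ := by
  refine (eq_bot_iff_isIsolated G').2 fun v => (degree_eq_zero G' v).1 ?_
  have degree_mem : G'.degree v ∈ Finset.univ.val.map ((⊥ : SimpleGraph V).degree ·) := by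
    rw [map_degree_eq_of_wl2_eq h]
    exact Multiset.mem_map_of_mem _ (Finset.mem_univ_val v)
  obtain ⟨u, -, degree_eq⟩ := Multiset.mem_map.1 degree_mem
  rw [← degree_eq, bot_degree]

lemma wl2L_eq_of_isIsolated (h₁ : G.IsIsolated e.1) (h₂ : G.IsIsolated e.2)
    (h₁' : G'.IsIsolated e'.1) (h₂' : G'.IsIsolated e'.2)
    (h : pairInit G l e = pairInit G' l' e') : wl2L G l t e = wl2L G' l' t e' := by
  induction t with
  | zero => exact h
  | succ t ih =>
    simp only [wl2L, ih, h₁ _, h₁' _, G.adj_comm _ e.2, G'.adj_comm _ e'.2, h₂ _, h₂' _,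
      Finset.filter_false, Finset.empty_val, Multiset.map_zero]
    rfl

end

theorem wl2_stronger_than_local_wl2_general :
    (∀ (σ : Type u) (V : Type v) (V' : Type w) [Fintype V] [Fintype V']
        (G : SimpleGraph V) (l : V → σ) (G' : SimpleGraph V') (l' : V' → σ)
        (e : V × V) (e' : V' × V') (t : ℕ),
        wl2 G l t e = wl2 G' l' t e' → wl2L G l t e = wl2L G' l' t e') ∧
    (∃ (n : ℕ) (G G' : SimpleGraph (Fin n)) (e : Fin n × Fin n),
        IsTargetLink G e ∧ IsTargetLink G' e ∧
        WL2LIndist G (fun _ => ()) G' (fun _ => ()) e e ∧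
        ¬ WL2Indist G (fun _ => ()) G' (fun _ => ()) e e) := by
  refine ⟨fun _ _ _ _ _ _ _ _ _ _ _ _ => wl2L_eq_of_wl2_eq, 4, ⊥, edge 2 3, (0, 1), ?_⟩
  have target_bot : IsTargetLink (⊥ : SimpleGraph (Fin 4)) (0, 1) := by simp [IsTargetLink]
  have target_edge : IsTargetLink (edge (2 : Fin 4) 3) (0, 1) := by simp [IsTargetLink, edge_adj]
  have isolated_zero : (edge (2 : Fin 4) 3).IsIsolated 0 := by simp [IsIsolated, edge_adj]
  have isolated_one : (edge (2 : Fin 4) 3).IsIsolated 1 := by simp [IsIsolated, edge_adj]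
  have edge_ne_bot : edge (2 : Fin 4) 3 ≠ ⊥ := ne_bot_iff_exists_adj.2 ⟨2, 3, by simp [edge_adj]⟩
  exact ⟨target_bot, target_edge,
    fun _ => wl2L_eq_of_isIsolated .bot .bot isolated_zero isolated_one
      (target_bot.pairInit_eq target_edge rfl rfl),
    fun indist => edge_ne_bot (eq_bot_of_wl2_bot_eq (indist 2))⟩

/-- Table 1 entry: 2-WL has stronger link discriminating power than local 2-WL. -/
theorem wl2_stronger_than_local_wl2 :
    (∀ (σ : Type u) (V V' : Type v) [Fintype V] [Fintype V']
        (G : SimpleGraph V) (l : V → σ) (G' : SimpleGraph V') (l' : V' → σ)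
        (e : V × V) (e' : V' × V'),
        IsTargetLink G e → IsTargetLink G' e' →
        WL2Indist G l G' l' e e' → WL2LIndist G l G' l' e e') ∧
    (∃ (n n' : ℕ) (G : SimpleGraph (Fin n)) (G' : SimpleGraph (Fin n'))
        (e : Fin n × Fin n) (e' : Fin n' × Fin n'),
        IsTargetLink G e ∧ IsTargetLink G' e' ∧
        WL2LIndist G (fun _ => ()) G' (fun _ => ()) e e' ∧
        ¬ WL2Indist G (fun _ => ()) G' (fun _ => ()) e e') := by
  obtain ⟨refines, n, G, G', e, he, he', indist, dist⟩ :=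
    wl2_stronger_than_local_wl2_general.{u, v, v}
  exact ⟨fun _ _ _ _ _ _ _ _ _ _ _ _ _ h t => refines _ _ _ _ _ _ _ _ _ t (h t),
    n, n, G, G', e, e, he, he', indist, dist⟩
end
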